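/- arXiv:2301.05073 — 4 statements merged into one kernel-verified Lean document; each statement's English description precedes it below -/
import Mathlib

section
/- Let s ≥ 1 be an integer. Assume that DRIFT, SC(s), FC(s) and JC hold at every (v,ℓ) with v ∈ V and integer ℓ ≥ 1. Then for all layers ℓ̲ ≤ ℓ̄ in ℕ: Ψ^s(ℓ̄) ≤ max{0, Ξ^s(ℓ̲) − (ℓ̄ − ℓ̲ + 1)·κ} + (ℓ̄ − ℓ̲)·κ/2. -/
/-!
Subtract `Λ` per layer from all pulse times and trace a large `ψ^s_{v,w}` backwards, one layer at a
time. Around a base node `p` and a level `a`, keep an early node `w` with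
`T w ≤ a - δ - 4sκ · dist(p, w)` and a late node `x` with `a + e + (4s-2)κ · dist(p, x) ≤ T x`.
By SC the early node can be moved one layer back at the price of `κ/2` in `δ`, and by FC the late
node can be moved one layer back with a gain of `κ` in `e`, unless the node in question is `p`.
In that case, and when `p` itself falls below level `a`, JC and FC provide a neighbour of `p` that
takes over. While `δ` is positive the early node stays away from the node at level `a`, so on the
last layer the difference of the two slopes contributes a further `2κ`.
-/

section GraphDistance

variable {V : Type*} {G : SimpleGraph V} {q v w x : V}

theorem dist_le_dist_add_one (h : G.Adj w x) : G.dist q x ≤ G.dist q w + 1 := by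
  have := h.diff_dist_adj (u := q)
  omega

theorem dist_le_dist_add_one_left (h : G.Adj v w) : G.dist v x ≤ G.dist w x + 1 := by
  rw [G.dist_comm (u := v), G.dist_comm (u := w)]
  exact dist_le_dist_add_one h.symm

theorem exists_adj_dist_eq_add_one (hG : G.Connected) (h : w ≠ q) :
    ∃ x, G.Adj w x ∧ G.dist q w = G.dist q x + 1 := by
  obtain ⟨W, hW⟩ := hG.exists_walk_length_eq_dist w q
  cases W with
  | nil => exact absurd rfl h
  | @cons _ x _ hadj W' =>
    refine ⟨x, hadj, (dist_le_dist_add_one hadj.symm).antisymm ?_⟩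
    rw [G.dist_comm (u := q) (v := x), G.dist_comm (u := q) (v := w), ← hW]
    exact Nat.succ_le_succ (G.dist_le W')

end GraphDistance

section Envelopes

variable {V : Type*} {G : SimpleGraph V} {S R η c : ℝ} {T T' : V → ℝ} {p q w y : V}

/-- The lower envelope `q ↦ inf_w (T w + S · dist(q, w))` of `T` is at most `c` at `q`, stated
through a node that witnesses it. -/
def LowerEnvelopeLE (G : SimpleGraph V) (S : ℝ) (T : V → ℝ) (q : V) (c : ℝ) : Prop :=
  ∃ w, T w + S * G.dist q w ≤ c

/-- The upper envelope `p ↦ sup_x (T x - R · dist(p, x))` of `T` is at least `c` at `p`, stated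
through a node that witnesses it. -/
def LEUpperEnvelope (G : SimpleGraph V) (R : ℝ) (T : V → ℝ) (p : V) (c : ℝ) : Prop :=
  ∃ x, c + R * G.dist p x ≤ T x

theorem lowerEnvelopeLE_neg_iff :
    LowerEnvelopeLE G R (-T) p (-c) ↔ LEUpperEnvelope G R T p c := by
  refine exists_congr fun x => ?_
  rw [Pi.neg_apply]
  constructor <;> intro h <;> linarith

theorem LowerEnvelopeLE.of_le (h : T q ≤ c) : LowerEnvelopeLE G S T q c :=
  ⟨q, by simpa using h⟩

theorem LEUpperEnvelope.of_le (h : c ≤ T p) : LEUpperEnvelope G R T p c :=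
  ⟨p, by simpa using h⟩

theorem LowerEnvelopeLE.mono {c' : ℝ} (h : LowerEnvelopeLE G S T q c) (hc : c ≤ c') :
    LowerEnvelopeLE G S T q c' :=
  h.imp fun _ hw => hw.trans hc

theorem LowerEnvelopeLE.of_adj (hS : 0 ≤ S) (hadj : G.Adj p y)
    (h : LowerEnvelopeLE G S T y c) : LowerEnvelopeLE G S T p (c + S) := by
  obtain ⟨w, hw⟩ := h
  have hdist : (G.dist p w : ℝ) ≤ G.dist y w + 1 := mod_cast dist_le_dist_add_one_left hadj
  exact ⟨w, by nlinarith⟩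

/-- The common form of SC and FC after elimination of the corrections: `T'` are the times on the
layer preceding that of `T`, `S` is the slope and `η` the loss. FC is the case of the negated
times. -/
def SlopeRule (G : SimpleGraph V) (S η : ℝ) (T T' : V → ℝ) : Prop :=
  ∀ w, (∀ x, G.Adj w x → T' x ≤ T w + η + S) ∨
    (∃ x, G.Adj w x ∧ T' x ≤ T w + η - S) ∨ T' w ≤ T w + η

theorem SlopeRule.exists_previous (hG : G.Connected) (hS : 0 ≤ S) (hrule : SlopeRule G S η T T')
    (hw : T w + S * G.dist q w ≤ c) :
    (∃ w', (w' = w ∨ G.Adj w w') ∧ T' w' + S * G.dist q w' ≤ c + η) ∨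
      (w = q ∧ ∀ x, G.Adj q x → T' x ≤ T q + η + S) := by
  rcases hrule w with hall | ⟨x, hx, hle⟩ | hle
  · rcases eq_or_ne w q with rfl | hne
    · exact Or.inr ⟨rfl, hall⟩
    · obtain ⟨x, hx, hdist⟩ := exists_adj_dist_eq_add_one hG hne
      have := hall x hx
      rw [hdist] at hw
      push_cast at hw
      exact Or.inl ⟨x, Or.inr hx, by linarith⟩
  · have hdist : (G.dist q x : ℝ) ≤ G.dist q w + 1 := mod_cast dist_le_dist_add_one hx
    exact Or.inl ⟨x, Or.inr hx, by nlinarith⟩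
  · exact Or.inl ⟨w, Or.inl rfl, by linarith⟩

theorem LowerEnvelopeLE.previous (hG : G.Connected) (hS : 0 ≤ S) (hrule : SlopeRule G S η T T')
    (h : LowerEnvelopeLE G S T q c) :
    LowerEnvelopeLE G S T' q (c + η) ∨
      (T q ≤ c ∧ ∀ x, G.Adj q x → T' x ≤ T q + η + S) := by
  obtain ⟨w, hw⟩ := h
  rcases hrule.exists_previous hG hS hw with ⟨w', -, hw'⟩ | ⟨rfl, hall⟩
  · exact Or.inl ⟨w', hw'⟩
  · exact Or.inr ⟨by simpa using hw, hall⟩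

theorem LEUpperEnvelope.previous (hG : G.Connected) (hR : 0 ≤ R)
    (hrule : SlopeRule G R η (-T) (-T')) (h : LEUpperEnvelope G R T p c) :
    LEUpperEnvelope G R T' p (c - η) ∨
      (c ≤ T p ∧ ∀ x, G.Adj p x → T p - η - R ≤ T' x) := by
  refine ((lowerEnvelopeLE_neg_iff.2 h).previous hG hR hrule).imp (fun h' => ?_) (fun h' => ?_)
  · rwa [show -c + η = -(c - η) by ring, lowerEnvelopeLE_neg_iff] at h'
  · refine ⟨neg_le_neg_iff.1 h'.1, fun x hx => ?_⟩
    have := h'.2 x hx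
    simp only [Pi.neg_apply] at this
    linarith

end Envelopes

section BackwardTrace

variable {V : Type*} {G : SimpleGraph V} {κ S R a e δ : ℝ} {T T' : V → ℝ} {p y : V}

/-- What the drift bounds together with SC, FC and JC say about the times `T` of a layer and `T'`
of the preceding one, both normalised by `Λ` per layer, once the corrections are eliminated. -/
structure LayerStep (G : SimpleGraph V) (κ S R : ℝ) (T T' : V → ℝ) : Prop where
  slow : SlopeRule G S (κ / 2) T T'
  fast : SlopeRule G R (-κ) (-T) (-T')
  jump_back : ∀ v, T v ≤ T' v ∨ ∀ x, G.Adj v x → T v + κ ≤ T' x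
  jump_ahead : ∀ v, T' v ≤ T v + 3 * κ / 2 ∨ ∀ x, G.Adj v x → T' x ≤ T v - κ / 2

/-- Level `a` is attained at the base `p` or at a neighbour `y` of it, and some node lies below
level `a` by `δ` plus `S` times its distance. In the last two cases the step from `p` to `y` is
paid for by an additional `S`. -/
inductive SlopeGap (G : SimpleGraph V) (S : ℝ) (T : V → ℝ) (p : V) (a δ : ℝ) : Prop
  | base (ha : a ≤ T p) (hlow : LowerEnvelopeLE G S T p (a - δ))
  | neighbor (y : V) (hadj : G.Adj p y) (ha : a ≤ T y)
      (hlow : LowerEnvelopeLE G S T y (a - δ - S))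
  | oppositeNeighbor (y : V) (hadj : G.Adj p y) (ha : a ≤ T y)
      (hlow : LowerEnvelopeLE G S T p (a - δ - S))

/-- The invariant of the backward trace: around some base node there is a gap `δ` of slope `S`
below some level, and a node exceeding that level by `e` plus `R` times its distance. -/
def TraceState (G : SimpleGraph V) (S R : ℝ) (T : V → ℝ) (e δ : ℝ) : Prop :=
  ∃ p a, LEUpperEnvelope G R T p (a + e) ∧ SlopeGap G S T p a δ

theorem SlopeGap.lowerEnvelopeLE (hS : 0 ≤ S) (h : SlopeGap G S T p a δ) :
    LowerEnvelopeLE G S T p (a - δ) := by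
  cases h with
  | base _ hlow => exact hlow
  | neighbor y hadj _ hlow => exact (hlow.of_adj hS hadj).mono (by linarith)
  | oppositeNeighbor y _ _ hlow => exact hlow.mono (by linarith)

/-- In the second case the early node has jumped onto `p`, so JC applies to both of its
positions. -/
theorem LayerStep.previous_lower_of_base (hG : G.Connected) (hκ : 0 ≤ κ) (hS : 0 ≤ S)
    (hstep : LayerStep G κ S R T T') (hδ : κ / 2 < δ) (ha : a ≤ T p)
    (hlow : LowerEnvelopeLE G S T p (a - δ)) :
    (∃ z, G.Adj p z ∧ LowerEnvelopeLE G S T' z (a - (δ - κ / 2) - S)) ∨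
      (∃ z, G.Adj p z ∧ T p + κ ≤ T' z ∧ T' p ≤ a - (δ - κ / 2) - S) := by
  obtain ⟨w, hw⟩ := hlow
  have hwp : w ≠ p := by
    rintro rfl
    simp only [SimpleGraph.dist_self, Nat.cast_zero, mul_zero, add_zero] at hw
    linarith
  obtain ⟨w', hww', hw'⟩ := (hstep.slow.exists_previous hG hS hw).resolve_right (hwp ·.1)
  rcases eq_or_ne w' p with rfl | hw'p
  · have hadj : G.Adj w w' := hww'.resolve_left hwp.symm
    rw [SimpleGraph.dist_eq_one_iff_adj.2 hadj.symm, Nat.cast_one, mul_one] at hw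
    rw [SimpleGraph.dist_self, Nat.cast_zero, mul_zero, add_zero] at hw'
    have hjump := (hstep.jump_back w').resolve_left (by linarith) w hadj.symm
    have hdrop := (hstep.jump_ahead w).resolve_left (by linarith) w' hadj
    exact Or.inr ⟨w, hadj.symm, hjump, by linarith⟩
  · obtain ⟨z, hz, hdist⟩ := exists_adj_dist_eq_add_one hG hw'p.symm
    rw [G.dist_comm, hdist, G.dist_comm (u := w')] at hw'
    push_cast at hw'
    exact Or.inl ⟨z, hz, w', by linarith⟩

theorem LayerStep.traceState_of_base (hG : G.Connected) (hκ : 0 ≤ κ) (hR : 0 ≤ R) (hRS : R ≤ S)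
    (hstep : LayerStep G κ S R T T') (hδ : κ / 2 < δ)
    (hup : LEUpperEnvelope G R T p (a + e)) (ha : a ≤ T p)
    (hlow : LowerEnvelopeLE G S T p (a - δ)) :
    TraceState G S R T' (e + κ) (δ - κ / 2) := by
  have hS : 0 ≤ S := hR.trans hRS
  have hup' := hup.previous hG hR hstep.fast
  rw [sub_neg_eq_add, add_assoc] at hup'
  rcases hstep.previous_lower_of_base hG hκ hS hδ ha hlow with
    ⟨z, hz, hlow'⟩ | ⟨z, hz, hjump, hdrop⟩
  · rcases hup' with hup' | ⟨hp, hfast⟩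
    · refine ⟨p, a, hup', ?_⟩
      rcases hstep.jump_back p with hjump | hjump
      · exact .base (ha.trans hjump) ((hlow'.of_adj hS hz).mono (by linarith))
      · exact .neighbor z hz (by linarith [hjump z hz]) hlow'
    · have hz' := hfast z hz
      exact ⟨z, a - R, .of_le (by linarith), .base (by linarith) (hlow'.mono (by linarith))⟩
  · rcases hup' with hup' | ⟨hp, -⟩
    · exact ⟨p, a, hup', .oppositeNeighbor z hz (by linarith) (.of_le hdrop)⟩
    · have hlow' : LowerEnvelopeLE G S T' z (a - (δ - κ / 2)) :=
        ((LowerEnvelopeLE.of_le hdrop).of_adj hS hz.symm).mono (by linarith)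
      exact ⟨z, a, .of_le (by linarith), .base (by linarith) hlow'⟩

theorem LayerStep.slopeGap_of_neighbor (hG : G.Connected) (hκ : 0 ≤ κ) (hS : 0 ≤ S)
    (hstep : LayerStep G κ S R T T') (hδ : κ / 2 < δ) (hadj : G.Adj p y) (ha : a ≤ T y)
    (hlow : LowerEnvelopeLE G S T y (a - δ - S)) :
    SlopeGap G S T' p a (δ - κ / 2) := by
  have hlow' : LowerEnvelopeLE G S T' y (a - (δ - κ / 2) - S) :=
    ((hlow.previous hG hS hstep.slow).resolve_right fun h => by linarith [h.1]).mono (by linarith)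
  rcases hstep.jump_back y with hjump | hjump
  · exact .neighbor y hadj (ha.trans hjump) hlow'
  · exact .base (by linarith [hjump p hadj.symm]) ((hlow'.of_adj hS hadj).mono (by linarith))

theorem LayerStep.slopeGap_of_oppositeNeighbor (hG : G.Connected) (hκ : 0 ≤ κ) (hS : 0 ≤ S)
    (hstep : LayerStep G κ S R T T') (hδ : κ / 2 < δ) (hadj : G.Adj p y) (ha : a ≤ T y)
    (hlow : LowerEnvelopeLE G S T p (a - δ - S)) :
    SlopeGap G S T' p a (δ - κ / 2) := by
  rcases hlow.previous hG hS hstep.slow with hlow' | ⟨hp, hslow⟩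
  · rcases hstep.jump_back y with hjump | hjump
    · exact .oppositeNeighbor y hadj (ha.trans hjump) (hlow'.mono (by linarith))
    · exact .base (by linarith [hjump p hadj.symm]) (hlow'.mono (by linarith))
  · have hy := hslow y hadj
    have hjump := (hstep.jump_back y).resolve_left (by linarith) p hadj.symm
    have hdrop := (hstep.jump_ahead p).resolve_left (by linarith) y hadj
    have hlow' : LowerEnvelopeLE G S T' p (T' y + S) :=
      (LowerEnvelopeLE.of_le le_rfl).of_adj hS hadj
    exact .base (by linarith) (hlow'.mono (by linarith))

theorem TraceState.previous (hG : G.Connected) (hκ : 0 ≤ κ) (hR : 0 ≤ R) (hRS : R ≤ S)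
    (hstep : LayerStep G κ S R T T') (he : 0 ≤ e) (hδ : κ / 2 < δ)
    (h : TraceState G S R T e δ) : TraceState G S R T' (e + κ) (δ - κ / 2) := by
  have hS : 0 ≤ S := hR.trans hRS
  obtain ⟨p, a, hup, hgap⟩ := h
  by_cases hp : a ≤ T p
  · exact hstep.traceState_of_base hG hκ hR hRS hδ hup hp (hgap.lowerEnvelopeLE hS)
  · have hup' : LEUpperEnvelope G R T' p (a + (e + κ)) := by
      rw [← add_assoc, ← sub_neg_eq_add]
      exact (hup.previous hG hR hstep.fast).resolve_right fun h => by linarith [h.1]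
    refine ⟨p, a, hup', ?_⟩
    cases hgap with
    | base ha _ => exact absurd ha hp
    | neighbor y hadj ha hlow => exact hstep.slopeGap_of_neighbor hG hκ hS hδ hadj ha hlow
    | oppositeNeighbor y hadj ha hlow =>
      exact hstep.slopeGap_of_oppositeNeighbor hG hκ hS hδ hadj ha hlow

theorem TraceState.iterate_previous (hG : G.Connected) (hκ : 0 ≤ κ) (hR : 0 ≤ R) (hRS : R ≤ S)
    {T : ℕ → V → ℝ} (hstep : ∀ j, LayerStep G κ S R (T (j + 1)) (T j)) (he : 0 ≤ e)
    {lo k : ℕ} (hδ : k * (κ / 2) < δ) (h : TraceState G S R (T (lo + k)) e δ) :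
    TraceState G S R (T lo) (e + k * κ) (δ - k * (κ / 2)) := by
  induction k generalizing e δ with
  | zero => simpa using h
  | succ k ih =>
    push_cast at hδ ⊢
    have hk : 0 ≤ (k : ℝ) * (κ / 2) := by positivity
    have hprev := h.previous hG hκ hR hRS (hstep (lo + k)) he (by linarith)
    convert ih (add_nonneg he hκ) (by linarith) hprev using 1 <;> ring

theorem SlopeGap.exists_early (hG : G.Connected) (hδ : 0 < δ) (h : SlopeGap G S T p a δ) :
    ∃ w, ∃ n : ℕ, 1 ≤ n ∧ G.dist p w ≤ n ∧ T w + S * n ≤ a - δ := by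
  cases h with
  | base ha hlow =>
    obtain ⟨w, hw⟩ := hlow
    refine ⟨w, G.dist p w, hG.pos_dist_of_ne ?_, le_rfl, hw⟩
    rintro rfl
    simp only [SimpleGraph.dist_self, Nat.cast_zero, mul_zero, add_zero] at hw
    linarith
  | neighbor y hadj _ hlow =>
    obtain ⟨w, hw⟩ := hlow
    refine ⟨w, G.dist y w + 1, by omega, dist_le_dist_add_one_left hadj, ?_⟩
    push_cast
    linarith
  | oppositeNeighbor y _ _ hlow =>
    obtain ⟨w, hw⟩ := hlow
    refine ⟨w, G.dist p w + 1, by omega, by omega, ?_⟩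
    push_cast
    linarith

theorem TraceState.exists_skew_ge (hG : G.Connected) (hR : 0 ≤ R) (hRS : R ≤ S) (hδ : 0 < δ)
    (h : TraceState G S R T e δ) :
    ∃ x w, e + δ + (S - R) ≤ T x - T w - R * G.dist x w := by
  obtain ⟨p, a, ⟨x, hx⟩, hgap⟩ := h
  obtain ⟨w, n, hn, hdist, hw⟩ := hgap.exists_early hG hδ
  refine ⟨x, w, ?_⟩
  have htri : (G.dist x w : ℝ) ≤ G.dist p x + n := by
    have := hG.dist_triangle (u := x) (v := p) (w := w)
    rw [G.dist_comm (u := x) (v := p)] at this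
    exact_mod_cast this.trans (Nat.add_le_add_left hdist _)
  have hslope : R * G.dist x w ≤ R * G.dist p x + R * n := by
    rw [← mul_add]
    exact mul_le_mul_of_nonneg_left htri hR
  have hgain : S - R ≤ (S - R) * n :=
    le_mul_of_one_le_right (sub_nonneg.2 hRS) (mod_cast hn)
  linarith

theorem exists_skew_ge_of_layerStep (hG : G.Connected) (hκ : 0 ≤ κ) (hR : 0 ≤ R) (hRS : R ≤ S)
    {T : ℕ → V → ℝ} (hstep : ∀ j, LayerStep G κ S R (T (j + 1)) (T j)) {lo k : ℕ} {v w : V}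
    (hψ : k * (κ / 2) < T (lo + k) v - T (lo + k) w - S * G.dist v w) :
    ∃ p q, T (lo + k) v - T (lo + k) w - S * G.dist v w + k * (κ / 2) + (S - R) ≤
      T lo p - T lo q - R * G.dist p q := by
  have hstart : TraceState G S R (T (lo + k)) 0
      (T (lo + k) v - T (lo + k) w - S * G.dist v w) :=
    ⟨v, T (lo + k) v, .of_le (by simp), .base le_rfl ⟨w, by linarith⟩⟩
  obtain ⟨p, q, hpq⟩ := (hstart.iterate_previous hG hκ hR hRS hstep le_rfl hψ).exists_skew_ge
    hG hR hRS (by linarith)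
  exact ⟨p, q, by linarith⟩

end BackwardTrace

theorem layerStep_of_corrections {V : Type*} {G : SimpleGraph V} {ϑ κ S R : ℝ} (hϑ : 0 < ϑ)
    (hκ : 0 ≤ κ) {T T' C : V → ℝ} (hupper : ∀ v, T v ≤ T' v - C v)
    (hlower : ∀ v, T' v - κ / 2 - C v / ϑ ≤ T v)
    (hSC : ∀ v, (∀ w, G.Adj v w → C v / ϑ ≤ T' v - T' w + S) ∨
      (∃ w, G.Adj v w ∧ C v / ϑ ≤ T' v - T' w - S) ∨ C v ≤ 0)
    (hFC : ∀ v, (∃ w, G.Adj v w ∧ T' v - T' w + R + κ ≤ C v) ∨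
      (∀ w, G.Adj v w → T' v - T' w - R + κ ≤ C v) ∨ κ ≤ C v)
    (hJC : ∀ v, (κ < C v / ϑ ∧ ∀ w, G.Adj v w → C v / ϑ ≤ T' v - T' w - κ) ∨
      (C v < 0 ∧ ∀ w, G.Adj v w → T' v - T' w + κ ≤ C v) ∨
      (0 ≤ C v / ϑ ∧ C v / ϑ ≤ κ)) :
    LayerStep G κ S R T T' where
  slow v := by
    have hv := hlower v
    rcases hSC v with hall | ⟨w, hw, hle⟩ | hC
    · exact Or.inl fun w hw => by linarith [hall w hw]
    · exact Or.inr (Or.inl ⟨w, hw, by linarith⟩)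
    · exact Or.inr (Or.inr (by linarith [div_nonpos_of_nonpos_of_nonneg hC hϑ.le]))
  fast v := by
    have hv := hupper v
    simp only [Pi.neg_apply]
    rcases hFC v with ⟨w, hw, hle⟩ | hall | hC
    · exact Or.inr (Or.inl ⟨w, hw, by linarith⟩)
    · exact Or.inl fun w hw => by linarith [hall w hw]
    · exact Or.inr (Or.inr (by linarith))
  jump_back v := by
    have hv := hupper v
    rcases le_or_gt 0 (C v) with hC | hC
    · exact Or.inl (by linarith)
    · have hneg : C v / ϑ < 0 := div_neg_of_neg_of_pos hC hϑ
      rcases hJC v with ⟨h, -⟩ | ⟨-, hall⟩ | ⟨h, -⟩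
      · linarith
      · exact Or.inr fun x hx => by linarith [hall x hx]
      · linarith
  jump_ahead v := by
    have hv := hlower v
    rcases hJC v with ⟨-, hall⟩ | ⟨hC, -⟩ | ⟨-, hC⟩
    · exact Or.inr fun x hx => by linarith [hall x hx]
    · exact Or.inl (by linarith [div_neg_of_neg_of_pos hC hϑ])
    · exact Or.inl (by linarith)

theorem stmt7_general {ϑ u d Λ κ s : ℝ} (hϑ : 1 ≤ ϑ) (hu : 0 ≤ u) (hΛ : d ≤ Λ)
    (hκ : κ = 2 * (u + (1 - 1 / ϑ) * (Λ - d)))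
    {V : Type*} {G : SimpleGraph V} (hG : G.Connected) {t C : V → ℕ → ℝ} (hs : 1 / 2 ≤ s)
    (hDRIFT : ∀ v ℓ,
      d - u + (Λ - d - C v (ℓ + 1)) / ϑ ≤ t v (ℓ + 1) - t v ℓ ∧
      t v (ℓ + 1) - t v ℓ ≤ Λ - C v (ℓ + 1))
    (hSC : ∀ v ℓ,
      (∀ w, G.Adj v w → C v (ℓ + 1) / ϑ ≤ t v ℓ - t w ℓ + 4 * s * κ) ∨
      (∃ w, G.Adj v w ∧ C v (ℓ + 1) / ϑ ≤ t v ℓ - t w ℓ - 4 * s * κ) ∨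
      C v (ℓ + 1) ≤ 0)
    (hFC : ∀ v ℓ,
      (∃ w, G.Adj v w ∧ t v ℓ - t w ℓ + (4 * s - 2) * κ + κ ≤ C v (ℓ + 1)) ∨
      (∀ w, G.Adj v w → t v ℓ - t w ℓ - (4 * s - 2) * κ + κ ≤ C v (ℓ + 1)) ∨
      κ ≤ C v (ℓ + 1))
    (hJC : ∀ v ℓ,
      (κ < C v (ℓ + 1) / ϑ ∧ ∀ w, G.Adj v w → C v (ℓ + 1) / ϑ ≤ t v ℓ - t w ℓ - κ) ∨
      (C v (ℓ + 1) < 0 ∧ ∀ w, G.Adj v w → t v ℓ - t w ℓ + κ ≤ C v (ℓ + 1)) ∨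
      (0 ≤ C v (ℓ + 1) / ϑ ∧ C v (ℓ + 1) / ϑ ≤ κ))
    {lo hi : ℕ} (hlohi : lo ≤ hi) {Ξ : ℝ}
    (hΞ : ∀ p q, t p lo - t q lo - (4 * s - 2) * κ * G.dist p q ≤ Ξ) (v w : V) :
    t v hi - t w hi - 4 * s * κ * G.dist v w ≤
      max 0 (Ξ - ((hi : ℝ) - lo + 1) * κ) + ((hi : ℝ) - lo) * (κ / 2) := by
  have hϑ0 : 0 < ϑ := by linarith
  have hκ0 : 0 ≤ κ := by
    have : 0 ≤ (1 - 1 / ϑ) * (Λ - d) :=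
      mul_nonneg (sub_nonneg.2 ((div_le_one hϑ0).2 hϑ)) (sub_nonneg.2 hΛ)
    linarith
  have hstep (j : ℕ) : LayerStep G κ (4 * s * κ) ((4 * s - 2) * κ)
      (fun v => t v (j + 1) - (j + 1 : ℕ) * Λ) (fun v => t v j - j * Λ) := by
    refine layerStep_of_corrections (C := (C · (j + 1))) hϑ0 hκ0 (fun v => ?_) (fun v => ?_)
      (by simpa using (hSC · j)) (by simpa using (hFC · j)) (by simpa using (hJC · j))
    · push_cast
      linarith [(hDRIFT v j).2]
    · have hdrift : (Λ - d - C v (j + 1)) / ϑ = 1 / ϑ * (Λ - d) - C v (j + 1) / ϑ := by ring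
      push_cast
      linarith [(hDRIFT v j).1]
  obtain ⟨k, rfl⟩ := Nat.exists_eq_add_of_le hlohi
  push_cast
  rw [add_sub_cancel_left]
  rcases le_or_gt (t v (lo + k) - t w (lo + k) - 4 * s * κ * G.dist v w) (k * (κ / 2)) with hψ | hψ
  · linarith [le_max_left 0 (Ξ - ((k : ℝ) + 1) * κ)]
  · obtain ⟨p, q, hpq⟩ := exists_skew_ge_of_layerStep hG hκ0 (by nlinarith) (by linarith)
      (T := fun j v => t v j - j * Λ) hstep (lo := lo) (k := k) (v := v) (w := w) (by linarith)
    linarith [hΞ p q, le_max_right 0 (Ξ - ((k : ℝ) + 1) * κ)]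

/-- potential decrease (Theorem `psi_bound`).
`tmax`/`tmin` over neighbours are expressed pointwise: an inequality
`x ≤ t_own - tmax + c` is equivalent to `∀ w ~ v, x ≤ t_own - t_w + c`, and
`x ≤ t_own - tmin - c` is equivalent to `∃ w ~ v, x ≤ t_own - t_w - c`
(the neighbourhood being nonempty since the minimum degree is `2`);
similarly for the reverse inequalities in FC and JC. -/
theorem stmt7
    (ϑ u d Λ κ : ℝ)
    (hϑ : 1 < ϑ) (hu : 0 ≤ u) (hd : u ≤ d) (hΛ : d < Λ)
    (hκ : κ = 2 * (u + (1 - 1/ϑ) * (Λ - d)))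
    {V : Type*} [Fintype V] [Nonempty V]
    (G : SimpleGraph V) [DecidableRel G.Adj]
    (hconn : G.Connected) (hdeg : ∀ v : V, 2 ≤ G.degree v)
    (D : ℕ) (hD : 1 ≤ D) (hdiam : ∀ v w : V, G.dist v w ≤ D)
    (t : V → ℕ → ℝ) (C : V → ℕ → ℝ)
    (s : ℕ) (hs : 1 ≤ s)
    (hDRIFT : ∀ (v : V) (ℓ : ℕ),
      d - u + (Λ - d - C v (ℓ+1)) / ϑ ≤ t v (ℓ+1) - t v ℓ ∧
      t v (ℓ+1) - t v ℓ ≤ Λ - C v (ℓ+1))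
    (hSC : ∀ (v : V) (ℓ : ℕ),
      (∀ w : V, G.Adj v w → C v (ℓ+1) / ϑ ≤ t v ℓ - t w ℓ + 4*(s:ℝ)*κ) ∨
      (∃ w : V, G.Adj v w ∧ C v (ℓ+1) / ϑ ≤ t v ℓ - t w ℓ - 4*(s:ℝ)*κ) ∨
      C v (ℓ+1) ≤ 0)
    (hFC : ∀ (v : V) (ℓ : ℕ),
      (∃ w : V, G.Adj v w ∧ t v ℓ - t w ℓ + (4*(s:ℝ)-2)*κ + κ ≤ C v (ℓ+1)) ∨
      (∀ w : V, G.Adj v w → t v ℓ - t w ℓ - (4*(s:ℝ)-2)*κ + κ ≤ C v (ℓ+1)) ∨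
      κ ≤ C v (ℓ+1))
    (hJC : ∀ (v : V) (ℓ : ℕ),
      (κ < C v (ℓ+1)/ϑ ∧ ∀ w : V, G.Adj v w → C v (ℓ+1)/ϑ ≤ t v ℓ - t w ℓ - κ) ∨
      (C v (ℓ+1) < 0 ∧ ∀ w : V, G.Adj v w → t v ℓ - t w ℓ + κ ≤ C v (ℓ+1)) ∨
      (0 ≤ C v (ℓ+1)/ϑ ∧ C v (ℓ+1)/ϑ ≤ κ)) :
    ∀ lo hi : ℕ, lo ≤ hi → ∀ v w : V,
      t v hi - t w hi - 4*(s:ℝ)*κ*(G.dist v w : ℝ) ≤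
        max 0 ((⨆ p : V, ⨆ q : V,
            (t p lo - t q lo - (4*(s:ℝ)-2)*κ*(G.dist p q : ℝ)))
          - ((hi : ℝ) - (lo : ℝ) + 1)*κ)
        + ((hi : ℝ) - (lo : ℝ)) * (κ/2) := by
  intro lo hi hlohi
  have hs' : (1 : ℝ) / 2 ≤ s := by linarith [(Nat.one_le_cast (α := ℝ)).2 hs]
  exact stmt7_general hϑ.le hu hΛ.le hκ hconn hs' hDRIFT hSC hFC hJC hlohi fun p q =>
    Finite.le_ciSup_of_le p (Finite.le_ciSup_of_le q le_rfl)
end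

section
/- Under the standing assumptions, for every ℓ ∈ ℕ: if ℓ < 4·Ξ^1(0)/κ then Ψ^1(ℓ) ≤ Ξ^1(0), and if ℓ ≥ 4·Ξ^1(0)/κ then Ψ^1(ℓ) ≤ 4κD. -/
/-!
After subtracting the nominal progress `Λ` per layer and dividing by `κ`, the conditions bound each
new pulse time in terms of the old ones by explicit constants (`LayerStep`). Write `Ξ` and `Ψ` for
the maxima of `x v - x w - c * dist v w` with `c = 2` and `c = 4`. One layer raises `Ξ` by at most
`1/2`.

The key estimate is that `Ξ ≤ a` on some layer implies `Ψ ≤ max (a - m/2) (a/3 + m/6)` after `m`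
further layers. To see it, follow a pair `(p, w)` backwards through the layers, together with a
third node `z` that starts at `p`. Going back one layer, the skew from `z` via the pivot `p` to `w`,
with weight `2` on the first leg and `4` on the second, grows by at least `1/2`, while the skew of
the pivot pair `(p, w)` shrinks by at most `1/2`. If the pivot pair collapses, the bound on the
growth of `Ξ` gives the second term of the maximum; if it survives to the first layer, `Ξ ≤ a` gives
the first term.

In a graph of diameter at most `D` we have `Ξ ≤ Ψ + 2 * D`, so as long as `8 * D ≤ a`, every `8 * D`
layers lower the bound `a` on `Ξ` by `2 * D`, at the rate of `4` layers per unit. Once `a ≤ 8 * D`,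
another `8 * D` layers give `Ψ ≤ 4 * D`, and this bound recurs on every layer at least `4 * D`
later.
-/

section Distance

variable {V : Type*} {G : SimpleGraph V} {u v w : V}

lemma cast_dist_eq_one_of_adj (h : G.Adj u v) : (G.dist u v : ℝ) = 1 := by
  exact_mod_cast SimpleGraph.dist_eq_one_iff_adj.mpr h

lemma cast_dist_le_add_one_of_adj (h : G.Adj u v) (w : V) :
    (G.dist u w : ℝ) ≤ G.dist v w + 1 := by
  have htri := h.reachable.dist_triangle_left w
  rw [SimpleGraph.dist_eq_one_iff_adj.mpr h, add_comm] at htri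
  exact_mod_cast htri

lemma cast_dist_triangle (hG : G.Connected) (u v w : V) :
    (G.dist u w : ℝ) ≤ G.dist u v + G.dist v w := by
  exact_mod_cast hG.dist_triangle

lemma exists_adj_cast_dist_eq_add_one (hG : G.Connected) (hvw : v ≠ w) :
    ∃ u, G.Adj v u ∧ (G.dist v w : ℝ) = G.dist u w + 1 := by
  obtain ⟨walk, hlength⟩ := hG.exists_walk_length_eq_dist v w
  cases walk with
  | nil => exact absurd rfl hvw
  | @cons _ u _ hvu tail =>
    rw [SimpleGraph.Walk.length_cons] at hlength
    have htail : (G.dist u w : ℝ) ≤ tail.length := by exact_mod_cast SimpleGraph.dist_le tail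
    have hdist : (tail.length : ℝ) + 1 = G.dist v w := by exact_mod_cast hlength
    exact ⟨u, hvu, le_antisymm (cast_dist_le_add_one_of_adj hvu w) (by linarith)⟩

end Distance

/-- `SkewLE G c x a` says that `x v - x w - c * dist v w` is at most `a` for all nodes `v`, `w`.
For normalized pulse times `x` on layer `ℓ`, the weights `c = 4` and `c = 2` give the bounds
`Ψ¹(ℓ) ≤ a * κ` and `Ξ¹(ℓ) ≤ a * κ`. -/
def SkewLE {V : Type*} (G : SimpleGraph V) (c : ℝ) (x : V → ℝ) (a : ℝ) : Prop :=
  ∀ v w, x v - x w - c * G.dist v w ≤ a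

namespace SkewLE

variable {V : Type*} {G : SimpleGraph V} {x : V → ℝ} {a c : ℝ}

lemma nonneg (h : SkewLE G c x a) (v : V) : 0 ≤ a := by
  simpa using h v v

lemma mono {b : ℝ} (h : SkewLE G c x a) (hab : a ≤ b) : SkewLE G c x b :=
  fun v w => (h v w).trans hab

lemma two_of_four {D : ℕ} (hdiam : ∀ v w, G.dist v w ≤ D) (h : SkewLE G 4 x a) :
    SkewLE G 2 x (a + 2 * D) := by
  intro v w
  have hdist : (G.dist v w : ℝ) ≤ D := by exact_mod_cast hdiam v w
  linarith [h v w]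

end SkewLE

/-- `LayerStep G x y` relates the normalized pulse times `x`, `y` (in units of `κ`, with the nominal
progress `Λ` per layer subtracted) of two consecutive layers. Up to this normalization, `fast` is
the upper drift bound combined with FC(1), `slow` the lower drift bound (which loses `κ / 2`)
combined with SC(1), and `jump_up`, `jump_down` are the upper and lower drift bounds combined
with JC. -/
structure LayerStep_s8 {V : Type*} (G : SimpleGraph V) (x y : V → ℝ) : Prop where
  fast : ∀ v, (∃ w, G.Adj v w ∧ y v ≤ x w - 3) ∨ (∀ w, G.Adj v w → y v ≤ x w + 1) ∨ y v ≤ x v - 1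
  jump_up : ∀ v, y v ≤ x v ∨ ∀ w, G.Adj v w → y v ≤ x w - 1
  slow : ∀ v, (∀ w, G.Adj v w → x w - 9 / 2 ≤ y v) ∨ (∃ w, G.Adj v w ∧ x w + 7 / 2 ≤ y v) ∨
    x v - 1 / 2 ≤ y v
  jump_down : ∀ v, (∀ w, G.Adj v w → x w + 1 / 2 ≤ y v) ∨ x v - 3 / 2 ≤ y v

/-- The invariant of the backward induction over layers, with slack `δ` half the number of layers
still to come: for all `z`, `p`, `w`, either the skew from `z` via the pivot `p` to `w`, weighted
`2` before and `4` after the pivot, is at most `B + δ`, or the skew of the pivot pair is at most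
`B - δ`. -/
def PivotBound {V : Type*} (G : SimpleGraph V) (B δ : ℝ) (x : V → ℝ) : Prop :=
  ∀ z p w, x z - x w - 2 * G.dist z p - 4 * G.dist p w ≤ B + δ ∨
    x p - x w - 4 * G.dist p w ≤ B - δ

namespace PivotBound

variable {V : Type*} {G : SimpleGraph V} {B δ : ℝ} {x : V → ℝ}

lemma skewLE_four (h : PivotBound G B δ x) (hδ : 0 ≤ δ) : SkewLE G 4 x (B + δ) := by
  intro p w
  rcases h p p w with hvia | hpair
  · simpa using hvia
  · linarith

lemma of_skewLE_two (hG : G.Connected) (h : SkewLE G 2 x (B + δ)) : PivotBound G B δ x := by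
  intro z p w
  have htri := cast_dist_triangle hG z p w
  exact Or.inl (by linarith [h z w])

end PivotBound

namespace LayerStep_s8

variable {V : Type*} {G : SimpleGraph V}

section SingleLayer

variable {x y : V → ℝ}

lemma exists_ahead_or_stalled (h : LayerStep_s8 G x y) (hG : G.Connected) (z p : V) :
    (∃ z', (z' = z ∨ G.Adj z z') ∧ y z - 2 * G.dist z p ≤ x z' - 2 * G.dist z' p - 1) ∨
      z = p ∧ ∀ v, G.Adj p v → y p ≤ x v + 1 := by
  rcases h.fast z with ⟨v, hzv, hv⟩ | hall | hself
  · have hdist := cast_dist_le_add_one_of_adj hzv.symm p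
    exact Or.inl ⟨v, Or.inr hzv, by linarith⟩
  · rcases eq_or_ne z p with rfl | hzp
    · exact Or.inr ⟨rfl, hall⟩
    · obtain ⟨v, hzv, hdist⟩ := exists_adj_cast_dist_eq_add_one hG hzp
      exact Or.inl ⟨v, Or.inr hzv, by linarith [hall v hzv]⟩
  · exact Or.inl ⟨z, Or.inl rfl, by linarith⟩

lemma exists_behind (h : LayerStep_s8 G x y) (hG : G.Connected) {p w : V} (hpw : p ≠ w) :
    ∃ q, (q = p → G.Adj p w) ∧ x q + 4 * G.dist p q - 1 / 2 ≤ y w + 4 * G.dist p w := by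
  simp only [G.dist_comm (u := p)]
  rcases h.slow w with hall | ⟨v, hwv, hv⟩ | hself
  · obtain ⟨v, hwv, hdist⟩ := exists_adj_cast_dist_eq_add_one hG hpw.symm
    exact ⟨v, fun hvp => hvp ▸ hwv.symm, by linarith [hall v hwv]⟩
  · have hdist := cast_dist_le_add_one_of_adj hwv.symm p
    exact ⟨v, fun hvp => hvp ▸ hwv.symm, by linarith⟩
  · exact ⟨w, fun hwp => absurd hwp.symm hpw, by linarith⟩

lemma skewLE_two (h : LayerStep_s8 G x y) (hG : G.Connected) {a : ℝ} (hx : SkewLE G 2 x a) :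
    SkewLE G 2 y (a + 1 / 2) := by
  intro v w
  have ha := hx.nonneg v
  rcases h.exists_ahead_or_stalled hG v w with ⟨v', hv', hahead⟩ | ⟨rfl, -⟩
  · rcases h.jump_down w with hall | hself
    · rcases eq_or_ne v' w with rfl | hv'w
      · rcases hv' with rfl | hadj
        · simp only [sub_self, SimpleGraph.dist_self, Nat.cast_zero]
          linarith
        · have hv := hall v hadj.symm
          have hdist := cast_dist_eq_one_of_adj hadj
          rcases h.jump_up v with hup | hup
          · linarith
          · have hskew := hx v' v
            rw [G.dist_comm] at hskew
            linarith [hup v' hadj]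
      · obtain ⟨u, hwu, hdist⟩ := exists_adj_cast_dist_eq_add_one hG hv'w.symm
        rw [G.dist_comm, G.dist_comm (u := u)] at hdist
        linarith [hall u hwu, hx v' u]
    · linarith [hx v' w]
  · simp only [sub_self, SimpleGraph.dist_self, Nat.cast_zero]
    linarith

lemma skew_four_le_of_stalled (h : LayerStep_s8 G x y) (hG : G.Connected) {p w : V} (hpw : p ≠ w)
    (hstalled : ∀ v, G.Adj p v → y p ≤ x v + 1) {b : ℝ} (hx : SkewLE G 4 x b) :
    y p - y w - 4 * G.dist p w ≤ b - 1 / 2 := by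
  have hb := hx.nonneg p
  obtain ⟨q, hq, hbehind⟩ := h.exists_behind hG hpw
  rcases eq_or_ne p q with rfl | hpq
  · have hadj := hq rfl
    have hdist := cast_dist_eq_one_of_adj hadj
    have hp := hstalled w hadj
    rcases h.jump_down w with hall | hself
    · have hw := hall p hadj.symm
      rcases h.jump_up p with hup | hup
      · linarith
      · have hskew := hx w p
        rw [G.dist_comm] at hskew
        linarith [hup w hadj]
    · linarith
  · obtain ⟨v, hpv, hdist⟩ := exists_adj_cast_dist_eq_add_one hG hpq
    linarith [hstalled v hpv, hx v q]

lemma exists_pivot_pair (h : LayerStep_s8 G x y) (hG : G.Connected) {p w : V} (hpw : p ≠ w) (z : V) :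
    (∃ p' w', x w' + 2 * G.dist z p' + 4 * G.dist p' w' - 1 / 2 ≤
          y w + 2 * G.dist z p + 4 * G.dist p w ∧
        y p - y w - 4 * G.dist p w ≤ x p' - x w' - 4 * G.dist p' w' + 1 / 2) ∨
      z = p ∧ x p + 1 / 2 ≤ y w := by
  obtain ⟨q, hq, hbehind⟩ := h.exists_behind hG hpw
  rcases h.jump_up p with hself | hup
  · exact Or.inl ⟨p, q, by linarith, by linarith⟩
  rcases eq_or_ne p q with rfl | hpq
  · have hadj := hq rfl
    have hdist := cast_dist_eq_one_of_adj hadj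
    rcases h.jump_down w with hdown | hself
    · have hw := hdown p hadj.symm
      rcases eq_or_ne p z with rfl | hpz
      · exact Or.inr ⟨rfl, hw⟩
      · obtain ⟨v, hpv, hcloser⟩ := exists_adj_cast_dist_eq_add_one hG hpz
        have hv := hup v hpv
        have hvp := cast_dist_eq_one_of_adj hpv.symm
        rw [G.dist_comm, G.dist_comm (u := v)] at hcloser
        exact Or.inl ⟨v, p, by linarith, by linarith⟩
    · have hw := hup w hadj
      have htri := cast_dist_triangle hG z p w
      refine Or.inl ⟨w, w, ?_, ?_⟩ <;> simp only [SimpleGraph.dist_self, Nat.cast_zero] <;> linarith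
  · obtain ⟨v, hpv, hcloser⟩ := exists_adj_cast_dist_eq_add_one hG hpq
    have hv := hup v hpv
    have htri := cast_dist_triangle hG z p v
    have hone := cast_dist_eq_one_of_adj hpv
    exact Or.inl ⟨v, q, by linarith, by linarith⟩

lemma pivotBound (h : LayerStep_s8 G x y) (hG : G.Connected) {B δ : ℝ} (hB : 0 ≤ B) (hδ : 0 ≤ δ)
    (hx : PivotBound G B (δ + 1 / 2) x) (hy : SkewLE G 2 y (3 * B - δ)) :
    PivotBound G B δ y := by
  intro z p w
  rcases eq_or_ne p w with rfl | hpw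
  · have hzp := hy z p
    simp only [sub_self, SimpleGraph.dist_self, Nat.cast_zero, mul_zero, sub_zero]
    rcases le_total δ B with hδB | hBδ
    · exact Or.inr (by linarith)
    · exact Or.inl (by linarith)
  rcases h.exists_ahead_or_stalled hG z p with ⟨z', -, hahead⟩ | ⟨rfl, hstalled⟩
  · rcases h.exists_pivot_pair hG hpw z' with ⟨p', w', hvia, hpair⟩ | ⟨rfl, hw⟩
    · exact (hx z' p' w').imp (fun _ => by linarith) fun _ => by linarith
    · simp only [SimpleGraph.dist_self, Nat.cast_zero] at hahead
      exact Or.inl (by linarith)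
  · have hskew := h.skew_four_le_of_stalled hG hpw hstalled (hx.skewLE_four (by linarith))
    simp only [SimpleGraph.dist_self, Nat.cast_zero]
    exact Or.inl (by linarith)

end SingleLayer

section Trajectory

variable {τ : ℕ → V → ℝ} {a : ℝ}

lemma skewLE_two_add_half (hτ : ∀ ℓ, LayerStep_s8 G (τ ℓ) (τ (ℓ + 1))) (hG : G.Connected)
    (h0 : SkewLE G 2 (τ 0) a) (m : ℕ) : SkewLE G 2 (τ m) (a + m / 2) := by
  induction m with
  | zero => simpa using h0
  | succ m ih => exact ((hτ m).skewLE_two hG ih).mono (by push_cast; linarith)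

lemma pivotBound_of_le (hτ : ∀ ℓ, LayerStep_s8 G (τ ℓ) (τ (ℓ + 1))) (hG : G.Connected)
    (h0 : SkewLE G 2 (τ 0) a) {M : ℕ} {B : ℝ} (hinit : a - M / 2 ≤ B) (hgrow : a + M / 2 ≤ 3 * B)
    {m : ℕ} (hm : m ≤ M) : PivotBound G B ((M - m : ℝ) / 2) (τ m) := by
  induction m with
  | zero => exact .of_skewLE_two hG (h0.mono (by push_cast; linarith))
  | succ m ih =>
    obtain ⟨v⟩ := hG.nonempty
    have hB : 0 ≤ B := by linarith [h0.nonneg v]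
    have hmM : ((m + 1 : ℕ) : ℝ) ≤ M := by exact_mod_cast hm
    have hprev := ih (by omega)
    refine (hτ m).pivotBound hG hB (by linarith) ?_
      ((skewLE_two_add_half hτ hG h0 (m + 1)).mono (by linarith))
    convert hprev using 1
    push_cast
    ring

lemma skewLE_four_add (hτ : ∀ ℓ, LayerStep_s8 G (τ ℓ) (τ (ℓ + 1))) (hG : G.Connected) {ℓ m : ℕ}
    (hℓ : SkewLE G 2 (τ ℓ) a) {B : ℝ} (hinit : a - m / 2 ≤ B) (hgrow : a + m / 2 ≤ 3 * B) :
    SkewLE G 4 (τ (ℓ + m)) B := by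
  have hpivot := pivotBound_of_le (fun k => hτ (ℓ + k)) hG hℓ hinit hgrow le_rfl
  simpa using hpivot.skewLE_four (by simp)

variable {D : ℕ}

lemma skewLE_four_add_of_skewLE_four (hτ : ∀ ℓ, LayerStep_s8 G (τ ℓ) (τ (ℓ + 1))) (hG : G.Connected)
    (hD : 1 ≤ D) (hdiam : ∀ v w, G.dist v w ≤ D) {ℓ m : ℕ} (hℓ : SkewLE G 4 (τ ℓ) (4 * D))
    (hm : 4 * D ≤ m) : SkewLE G 4 (τ (ℓ + m)) (4 * D) := by
  induction m using Nat.strong_induction_on with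
  | _ m ih =>
    rcases le_or_gt m (12 * D) with hshort | hlong
    · have hm' : (4 * D : ℝ) ≤ m := by exact_mod_cast hm
      have hshort' : (m : ℝ) ≤ 12 * D := by exact_mod_cast hshort
      exact skewLE_four_add hτ hG (hℓ.two_of_four hdiam) (by linarith) (by linarith)
    · obtain ⟨k, rfl⟩ := Nat.exists_eq_add_of_le' hm
      have hk := ih k (by omega) (by omega)
      rw [← add_assoc]
      exact skewLE_four_add hτ hG (hk.two_of_four hdiam) (by push_cast; linarith)
        (by push_cast; linarith)

lemma skewLE_four_add_of_four_mul_le (hτ : ∀ ℓ, LayerStep_s8 G (τ ℓ) (τ (ℓ + 1))) (hG : G.Connected)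
    (hD : 1 ≤ D) (hdiam : ∀ v w, G.dist v w ≤ D) {ℓ m : ℕ} (hℓ : SkewLE G 2 (τ ℓ) a)
    (hm : 4 * a ≤ m) : SkewLE G 4 (τ (ℓ + m)) (4 * D) := by
  induction m using Nat.strong_induction_on generalizing ℓ a with
  | _ m ih =>
    rcases le_or_gt m (16 * D) with hshort | hlong
    · have hshort' : (m : ℝ) ≤ 16 * D := by exact_mod_cast hshort
      exact skewLE_four_add hτ hG hℓ (by linarith) (by linarith)
    obtain ⟨k, rfl⟩ := Nat.exists_eq_add_of_le (show 8 * D ≤ m by omega)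
    rw [← add_assoc]
    rcases le_or_gt a (8 * D) with hsmall | hlarge
    · have hsettled : SkewLE G 4 (τ (ℓ + 8 * D)) (4 * D) :=
        skewLE_four_add hτ hG hℓ (by push_cast; linarith) (by push_cast; linarith)
      exact skewLE_four_add_of_skewLE_four hτ hG hD hdiam hsettled (by omega)
    · have hdecreased : SkewLE G 4 (τ (ℓ + 8 * D)) (a - 4 * D) :=
        skewLE_four_add hτ hG hℓ (by push_cast; linarith) (by push_cast; linarith)
      refine ih k (by omega) (hdecreased.two_of_four hdiam) ?_
      push_cast at hm
      linarith

end Trajectory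

end LayerStep_s8

section Normalization

variable {V : Type*} {G : SimpleGraph V} {ϑ u d Λ κ : ℝ}

lemma layerStep_of_pulse_conditions (hϑ : 0 < ϑ) (hκ0 : 0 < κ)
    (hκ : κ = 2 * (u + (1 - 1 / ϑ) * (Λ - d))) {t₀ t₁ C x y : V → ℝ} {r : ℝ}
    (ht₀ : ∀ v, t₀ v = κ * x v + r) (ht₁ : ∀ v, t₁ v = κ * y v + (r + Λ))
    (hDRIFT : ∀ v, d - u + (Λ - d - C v) / ϑ ≤ t₁ v - t₀ v ∧ t₁ v - t₀ v ≤ Λ - C v)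
    (hSC : ∀ v, (∀ w, G.Adj v w → C v / ϑ ≤ t₀ v - t₀ w + 4 * κ) ∨
      (∃ w, G.Adj v w ∧ C v / ϑ ≤ t₀ v - t₀ w - 4 * κ) ∨ C v ≤ 0)
    (hFC : ∀ v, (∃ w, G.Adj v w ∧ t₀ v - t₀ w + 2 * κ + κ ≤ C v) ∨
      (∀ w, G.Adj v w → t₀ v - t₀ w - 2 * κ + κ ≤ C v) ∨ κ ≤ C v)
    (hJC : ∀ v, (κ < C v / ϑ ∧ ∀ w, G.Adj v w → C v / ϑ ≤ t₀ v - t₀ w - κ) ∨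
      (C v < 0 ∧ ∀ w, G.Adj v w → t₀ v - t₀ w + κ ≤ C v) ∨ (0 ≤ C v / ϑ ∧ C v / ϑ ≤ κ)) :
    LayerStep_s8 G x y := by
  have hdrift (v : V) : d - u + (Λ - d - C v) / ϑ = Λ - κ / 2 - C v / ϑ := by
    rw [hκ]; field_simp; ring
  simp only [ht₀, ht₁, hdrift] at hDRIFT hSC hFC hJC
  have scale {b c : ℝ} (hbc : κ * b ≤ κ * c) : b ≤ c := le_of_mul_le_mul_left hbc hκ0
  refine ⟨fun v => ?_, fun v => ?_, fun v => ?_, fun v => ?_⟩ <;>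
    obtain ⟨hlower, hupper⟩ := hDRIFT v
  · rcases hFC v with ⟨w, hvw, hw⟩ | hall | hself
    · exact Or.inl ⟨w, hvw, scale (by linarith)⟩
    · exact Or.inr (Or.inl fun w hvw => scale (by linarith [hall w hvw]))
    · exact Or.inr (Or.inr (scale (by linarith)))
  · rcases hJC v with ⟨hC, -⟩ | ⟨-, hall⟩ | ⟨hC, -⟩
    · have hC0 : 0 < C v := (div_pos_iff_of_pos_right hϑ).mp (hκ0.trans hC)
      exact Or.inl (scale (by linarith))
    · exact Or.inr fun w hvw => scale (by linarith [hall w hvw])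
    · have hC0 : 0 ≤ C v := by simpa using (le_div_iff₀ hϑ).mp hC
      exact Or.inl (scale (by linarith))
  · rcases hSC v with hall | ⟨w, hvw, hw⟩ | hC
    · exact Or.inl fun w hvw => scale (by linarith [hall w hvw])
    · exact Or.inr (Or.inl ⟨w, hvw, scale (by linarith)⟩)
    · have hC0 : C v / ϑ ≤ 0 := div_nonpos_of_nonpos_of_nonneg hC hϑ.le
      exact Or.inr (Or.inr (scale (by linarith)))
  · rcases hJC v with ⟨-, hall⟩ | ⟨hC, -⟩ | ⟨-, hC⟩
    · exact Or.inl fun w hvw => scale (by linarith [hall w hvw])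
    · have hC0 : C v / ϑ < 0 := div_neg_of_neg_of_pos hC hϑ
      exact Or.inr (scale (by linarith))
    · exact Or.inr (scale (by linarith))

lemma skew_le_iff_normalized (hκ0 : 0 < κ) (t₁ t₂ r c n S : ℝ) :
    t₁ - t₂ - c * κ * n ≤ S ↔ (t₁ - r) / κ - (t₂ - r) / κ - c * n ≤ S / κ := by
  rw [← div_le_div_iff_of_pos_right hκ0]
  congr! 1
  field_simp
  ring

lemma drift_unit_pos (hϑ : 1 < ϑ) (hu : 0 ≤ u) (hΛ : d < Λ) :
    0 < 2 * (u + (1 - 1 / ϑ) * (Λ - d)) := by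
  have hinv : 1 / ϑ < 1 := (div_lt_one (one_pos.trans hϑ)).mpr hϑ
  have hprod := mul_pos (sub_pos.mpr hinv) (sub_pos.mpr hΛ)
  linarith

end Normalization

lemma le_iSup_iSup_of_finite {α ι ι' : Type*} [ConditionallyCompleteLattice α]
    [Finite ι] [Finite ι'] (f : ι → ι' → α) (i : ι) (j : ι') : f i j ≤ ⨆ i, ⨆ j, f i j :=
  (Finite.le_ciSup (f i) j).trans (Finite.le_ciSup (fun i => ⨆ j, f i j) i)

theorem stmt8_general
    {ϑ u d Λ κ : ℝ} (hϑ : 1 < ϑ) (hu : 0 ≤ u) (hΛ : d < Λ)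
    (hκ : κ = 2 * (u + (1 - 1 / ϑ) * (Λ - d)))
    {V : Type*} {G : SimpleGraph V} (hG : G.Connected)
    {D : ℕ} (hD : 1 ≤ D) (hdiam : ∀ v w, G.dist v w ≤ D) {t C : V → ℕ → ℝ}
    (hDRIFT : ∀ v ℓ, d - u + (Λ - d - C v (ℓ + 1)) / ϑ ≤ t v (ℓ + 1) - t v ℓ ∧
      t v (ℓ + 1) - t v ℓ ≤ Λ - C v (ℓ + 1))
    (hSC : ∀ v ℓ, (∀ w, G.Adj v w → C v (ℓ + 1) / ϑ ≤ t v ℓ - t w ℓ + 4 * κ) ∨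
      (∃ w, G.Adj v w ∧ C v (ℓ + 1) / ϑ ≤ t v ℓ - t w ℓ - 4 * κ) ∨ C v (ℓ + 1) ≤ 0)
    (hFC : ∀ v ℓ, (∃ w, G.Adj v w ∧ t v ℓ - t w ℓ + 2 * κ + κ ≤ C v (ℓ + 1)) ∨
      (∀ w, G.Adj v w → t v ℓ - t w ℓ - 2 * κ + κ ≤ C v (ℓ + 1)) ∨ κ ≤ C v (ℓ + 1))
    (hJC : ∀ v ℓ, (κ < C v (ℓ + 1) / ϑ ∧
        ∀ w, G.Adj v w → C v (ℓ + 1) / ϑ ≤ t v ℓ - t w ℓ - κ) ∨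
      (C v (ℓ + 1) < 0 ∧ ∀ w, G.Adj v w → t v ℓ - t w ℓ + κ ≤ C v (ℓ + 1)) ∨
      (0 ≤ C v (ℓ + 1) / ϑ ∧ C v (ℓ + 1) / ϑ ≤ κ))
    {S : ℝ} (hS : ∀ v w, t v 0 - t w 0 - 2 * κ * G.dist v w ≤ S) (ℓ : ℕ) :
    (ℓ < 4 * S / κ → ∀ v w, t v ℓ - t w ℓ - 4 * κ * G.dist v w ≤ S) ∧
      (4 * S / κ ≤ ℓ → ∀ v w, t v ℓ - t w ℓ - 4 * κ * G.dist v w ≤ 4 * κ * D) := by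
  have hϑ0 : 0 < ϑ := one_pos.trans hϑ
  have hκ0 : 0 < κ := hκ ▸ drift_unit_pos hϑ hu hΛ
  let τ : ℕ → V → ℝ := fun k v => (t v k - Λ * k) / κ
  have hτ (k : ℕ) : LayerStep_s8 G (τ k) (τ (k + 1)) :=
    layerStep_of_pulse_conditions hϑ0 hκ0 hκ (r := Λ * k)
      (fun v => by simp only [τ]; field_simp; ring)
      (fun v => by simp only [τ]; push_cast; field_simp; ring)
      (hDRIFT · k) (hSC · k) (hFC · k) (hJC · k)
  have hinit : SkewLE G 2 (τ 0) (S / κ) := fun v w =>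
    (skew_le_iff_normalized hκ0 _ _ _ _ _ _).mp (hS v w)
  rw [mul_div_assoc]
  refine ⟨fun hℓ v w => ?_, fun hℓ v w => ?_⟩ <;>
    rw [skew_le_iff_normalized hκ0 _ _ (Λ * ℓ)]
  · have hearly : SkewLE G 4 (τ (0 + ℓ)) (S / κ) :=
      LayerStep_s8.skewLE_four_add hτ hG hinit (sub_le_self _ (by positivity)) (by linarith)
    rw [zero_add] at hearly
    exact hearly v w
  · have hlate : SkewLE G 4 (τ (0 + ℓ)) (4 * D) :=
      LayerStep_s8.skewLE_four_add_of_four_mul_le hτ hG hD hdiam hinit hℓ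
    rw [zero_add] at hlate
    rw [mul_right_comm, mul_div_cancel_right₀ _ hκ0.ne']
    exact hlate v w

/-- The `tmax`/`tmin` over neighbours in the SC/FC/JC conditions are expressed
pointwise over the (nonempty) neighbourhood, which is equivalent. -/
theorem stmt8
    (ϑ u d Λ κ : ℝ)
    (hϑ : 1 < ϑ) (hu : 0 ≤ u) (hd : u ≤ d) (hΛ : d < Λ)
    (hκ : κ = 2 * (u + (1 - 1/ϑ) * (Λ - d)))
    {V : Type*} [Fintype V] [Nonempty V]
    (G : SimpleGraph V) [DecidableRel G.Adj]
    (hconn : G.Connected) (hdeg : ∀ v : V, 2 ≤ G.degree v)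
    (D : ℕ) (hD : 1 ≤ D) (hdiam : ∀ v w : V, G.dist v w ≤ D)
    (t : V → ℕ → ℝ) (C : V → ℕ → ℝ)
    (hDRIFT : ∀ (v : V) (ℓ : ℕ),
      d - u + (Λ - d - C v (ℓ+1)) / ϑ ≤ t v (ℓ+1) - t v ℓ ∧
      t v (ℓ+1) - t v ℓ ≤ Λ - C v (ℓ+1))
    (hSC : ∀ (s : ℕ) (v : V) (ℓ : ℕ),
      (∀ w : V, G.Adj v w → C v (ℓ+1) / ϑ ≤ t v ℓ - t w ℓ + 4*(s:ℝ)*κ) ∨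
      (∃ w : V, G.Adj v w ∧ C v (ℓ+1) / ϑ ≤ t v ℓ - t w ℓ - 4*(s:ℝ)*κ) ∨
      C v (ℓ+1) ≤ 0)
    (hFC : ∀ (s : ℕ), 1 ≤ s → ∀ (v : V) (ℓ : ℕ),
      (∃ w : V, G.Adj v w ∧ t v ℓ - t w ℓ + (4*(s:ℝ)-2)*κ + κ ≤ C v (ℓ+1)) ∨
      (∀ w : V, G.Adj v w → t v ℓ - t w ℓ - (4*(s:ℝ)-2)*κ + κ ≤ C v (ℓ+1)) ∨
      κ ≤ C v (ℓ+1))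
    (hJC : ∀ (v : V) (ℓ : ℕ),
      (κ < C v (ℓ+1)/ϑ ∧ ∀ w : V, G.Adj v w → C v (ℓ+1)/ϑ ≤ t v ℓ - t w ℓ - κ) ∨
      (C v (ℓ+1) < 0 ∧ ∀ w : V, G.Adj v w → t v ℓ - t w ℓ + κ ≤ C v (ℓ+1)) ∨
      (0 ≤ C v (ℓ+1)/ϑ ∧ C v (ℓ+1)/ϑ ≤ κ))
    : ∀ ℓ : ℕ,
      ((ℓ:ℝ) < 4 * (⨆ p : V, ⨆ q : V, (t p 0 - t q 0 - 2*κ*(G.dist p q : ℝ))) / κ →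
        ∀ v w : V, t v ℓ - t w ℓ - 4*κ*(G.dist v w : ℝ) ≤
          ⨆ p : V, ⨆ q : V, (t p 0 - t q 0 - 2*κ*(G.dist p q : ℝ))) ∧
      (4 * (⨆ p : V, ⨆ q : V, (t p 0 - t q 0 - 2*κ*(G.dist p q : ℝ))) / κ ≤ (ℓ:ℝ) →
        ∀ v w : V, t v ℓ - t w ℓ - 4*κ*(G.dist v w : ℝ) ≤ 4*κ*(D:ℝ)) := by
  exact stmt8_general hϑ hu hΛ hκ hconn hD hdiam hDRIFT
    (fun v ℓ => by simpa only [Nat.cast_one, mul_one] using hSC 1 v ℓ)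
    (fun v ℓ => by
      simpa only [Nat.cast_one, mul_one, show (4 - 2 : ℝ) = 2 by norm_num] using hFC 1 le_rfl v ℓ)
    hJC (le_iSup_iSup_of_finite fun p q => t p 0 - t q 0 - 2 * κ * (G.dist p q : ℝ))
end

section
/- Under the standing assumptions, if L_0 ≤ 4κ, then Ψ^1(ℓ) ≤ 2κD for all ℓ ∈ ℕ. -/
/-!
Measure pulse times in units of `κ` after subtracting `Λ` per layer, and suppose that `t_v` exceeds
`t_w + 4s·dist(v,w)` by more than `2D` on some layer. Go back through the layers from there. The
leader `w` loses at most `1/2` per layer: by SC it stays, or it moves one edge and the term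
`4s·dist` pays for the move. The trailing node `v` gains `1` per layer by FC, as long as it has not
caught up with the leader, at the price of weighing distances by `4s - 2` only. Hence after `4D`
layers the skew has gone from `ψ^s` to some `ξ^s` that is larger by `2D`; since `ξ^s ≤ ψ^s + 2D`,
the earlier layer violated the bound already, and if layer `0` is reached first, its skew `ψ^s` is
positive, contrary to the bound on `L_0`.

The two sides interact because FC needs a fixed target while the leader moves. The walk from the
trailing to the leading side is therefore kept as a stack, on which the leader pushes and pops, and
every vertex of the stack that may become the leader's position again carries its own trailing
candidate. A candidate that reaches its target waits on the stack, where JC lets it lose nothing.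
-/

namespace GradientTrix

variable {V : Type*} {G : SimpleGraph V}

section Distance

lemma exists_adj_dist_add_one_le (hG : G.Connected) {y c : V} (hyc : y ≠ c) :
    ∃ x, G.Adj y x ∧ G.dist x c + 1 ≤ G.dist y c := by
  obtain ⟨p, hp⟩ := hG.exists_walk_length_eq_dist y c
  cases p with
  | nil => exact absurd rfl hyc
  | cons hadj q =>
    refine ⟨_, hadj, ?_⟩
    rw [← hp, SimpleGraph.Walk.length_cons]
    exact Nat.add_le_add_right (SimpleGraph.dist_le q) 1

lemma dist_le_dist_add_one_of_adj (hG : G.Connected) {x y : V} (c : V) (hxy : G.Adj x y) :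
    G.dist y c ≤ G.dist x c + 1 := by
  calc G.dist y c ≤ G.dist y x + G.dist x c := hG.dist_triangle
    _ = G.dist x c + 1 := by rw [SimpleGraph.dist_eq_one_iff_adj.2 hxy.symm, add_comm]

lemma dist_getVert_le {u v : V} (p : G.Walk u v) (r : ℕ) : G.dist u (p.getVert r) ≤ r :=
  (SimpleGraph.dist_le (p.take r)).trans ((p.take_length r).trans_le (min_le_left _ _))

lemma sub_le_mul_dist (hG : G.Connected) {f : V → ℝ} {L : ℝ}
    (hf : ∀ v w, G.Adj v w → f v - f w ≤ L) (v w : V) : f v - f w ≤ L * G.dist v w := by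
  have along_walk : ∀ {v w : V} (p : G.Walk v w), f v - f w ≤ L * p.length := by
    intro v w p
    induction p with
    | nil => simp
    | cons hadj q ih =>
      rw [SimpleGraph.Walk.length_cons]
      push_cast
      linarith [hf _ _ hadj]
  obtain ⟨p, hp⟩ := hG.exists_walk_length_eq_dist v w
  exact hp ▸ along_walk p

end Distance

/-- What DRIFT, FC(s), SC(s) and JC say about the pulse times `a` and `b` of two consecutive layers,
measured in units of `κ` after subtracting `Λ` per layer. The parameter `μ` stands for `4s - 2`, so
that `μ + 2` stands for `4s`. -/
structure IsLayerStep (G : SimpleGraph V) (μ : ℝ) (a b : V → ℝ) : Prop where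
  fast : ∀ p, b p ≤ a p - 1 ∨ (∃ x, G.Adj p x ∧ b p ≤ a x - μ - 1) ∨
    ∀ x, G.Adj p x → b p ≤ a x + μ - 1
  slow : ∀ q, a q - 1 / 2 ≤ b q ∨ (∀ x, G.Adj q x → a x - (μ + 2) - 1 / 2 ≤ b q) ∨
    ∃ x, G.Adj q x ∧ a x + (μ + 2) - 1 / 2 ≤ b q
  jump_le : ∀ p, b p ≤ a p ∨ ∀ x, G.Adj p x → b p ≤ a x - 1
  le_jump : ∀ q, a q - 3 / 2 ≤ b q ∨ ∀ x, G.Adj q x → a x + 1 / 2 ≤ b q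

/-- Some vertex `y` is a trailing candidate aimed at `c`: its time is at least `T - β`, where its
distance to `c` is charged at rate `μ`. -/
def Approaching (G : SimpleGraph V) (μ : ℝ) (b : V → ℝ) (T : ℝ) (c : V) (β : ℝ) : Prop :=
  ∃ y, T + μ * G.dist y c ≤ b y + β

/-- Some vertex at a position in `[r, H)` of the stack `s` is a trailing candidate that has stopped
there: its time is at least `T - β`. -/
def Waiting (b : V → ℝ) (T : ℝ) (s : ℕ → V) (H r : ℕ) (β : ℝ) : Prop :=
  ∃ i, r ≤ i ∧ i < H ∧ T ≤ b (s i) + β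

/-- The state, `m` layers back from a pair with trailing time `T` and leading time `S` (the latter
including the distance term), on a layer with times `b`. The stack is the walk `s 0, …, s H`, the
leader is at `s H`, and `ρ` is the credit the leader has accumulated. The values of `s` beyond `H`
are irrelevant. The condition at `r = 0` forces `0 < H`. -/
structure IsTrace (G : SimpleGraph V) (μ : ℝ) (b : V → ℝ) (T S m : ℝ) (H : ℕ) (s : ℕ → V) (ρ : ℝ) :
    Prop where
  adj : ∀ i < H, G.Adj (s i) (s (i + 1))
  leader : b (s H) + ρ + (μ + 2) * H ≤ S + m / 2
  covered : ∀ r ≤ H, (r ≠ 0 ∧ Approaching G μ b (T + m) (s r) (ρ + μ * r)) ∨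
    Waiting b T s H r (ρ + μ * r)

variable {μ : ℝ} {a b : V → ℝ}

section Approaching

variable {F β : ℝ} {c q : V}

lemma Approaching.mono {β' : ℝ} (h : Approaching G μ b F c β) (hβ : β ≤ β') :
    Approaching G μ b F c β' := by
  obtain ⟨y, hy⟩ := h
  exact ⟨y, by linarith⟩

lemma Approaching.of_adj (hG : G.Connected) (hμ : 0 ≤ μ) {x : V} (h : Approaching G μ b F c β)
    (hcx : G.Adj c x) : Approaching G μ b F x (β + μ) := by
  obtain ⟨y, hy⟩ := h
  have hdist : (G.dist y x : ℝ) ≤ G.dist y c + 1 := by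
    rw [G.dist_comm, G.dist_comm (u := y)]
    exact_mod_cast dist_le_dist_add_one_of_adj hG y hcx
  exact ⟨y, by linarith [mul_le_mul_of_nonneg_left hdist hμ]⟩

lemma Approaching.step (hG : G.Connected) (hμ : 0 ≤ μ) (hab : IsLayerStep G μ a b)
    (h : Approaching G μ b F c β) : Approaching G μ a (F + 1) c β ∨ F ≤ b c + β := by
  obtain ⟨y, hy⟩ := h
  rcases eq_or_ne y c with rfl | hyc
  · right
    simpa using hy
  left
  rcases hab.fast y with hstay | ⟨x, hyx, haway⟩ | htoward
  · exact ⟨y, by linarith⟩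
  · have hdist : (G.dist x c : ℝ) ≤ G.dist y c + 1 := by
      exact_mod_cast dist_le_dist_add_one_of_adj hG c hyx
    exact ⟨x, by linarith [mul_le_mul_of_nonneg_left hdist hμ]⟩
  · obtain ⟨x, hyx, hdist⟩ := exists_adj_dist_add_one_le hG hyc
    have hdist' : (G.dist x c : ℝ) + 1 ≤ G.dist y c := by exact_mod_cast hdist
    exact ⟨x, by linarith [htoward x hyx, mul_le_mul_of_nonneg_left hdist' hμ]⟩

/-- The first inequality covers the case that the new candidate sits at the target `q` itself,
which then is charged for one edge all the same. -/
lemma Approaching.exists_step_of_jump (hG : G.Connected) (hμ : 0 ≤ μ) (hab : IsLayerStep G μ a b)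
    (hjump : ∀ x, G.Adj q x → a x + 1 / 2 ≤ b q) (hmiss : b q + β < F)
    (h : Approaching G μ b F q β) :
    ∃ y, F + 1 + μ ≤ a y + β ∧ F + 1 + μ * G.dist y q ≤ a y + β := by
  obtain ⟨y, hy⟩ := h
  have hyq : y ≠ q := by
    rintro rfl
    simp only [SimpleGraph.dist_self, Nat.cast_zero, mul_zero] at hy
    linarith
  have one_le_dist {x : V} (hxq : x ≠ q) : μ ≤ μ * G.dist x q :=
    le_mul_of_one_le_right hμ (by exact_mod_cast hG.pos_dist_of_ne hxq)
  rcases hab.fast y with hstay | ⟨x, hyx, haway⟩ | htoward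
  · exact ⟨y, by linarith [one_le_dist hyq], by linarith⟩
  · have hdist : (G.dist x q : ℝ) ≤ G.dist y q + 1 := by
      exact_mod_cast dist_le_dist_add_one_of_adj hG q hyx
    exact ⟨x, by linarith [one_le_dist hyq], by linarith [mul_le_mul_of_nonneg_left hdist hμ]⟩
  obtain ⟨x, hyx, hdist⟩ := exists_adj_dist_add_one_le hG hyq
  have hdist' : (G.dist x q : ℝ) + 1 ≤ G.dist y q := by exact_mod_cast hdist
  rcases eq_or_ne x q with rfl | hxq
  · rcases hab.jump_le y with hle | hle
    · linarith [hjump y hyx.symm, one_le_dist hyq]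
    · have hreach : F + 1 + μ ≤ a x + β := by linarith [hle x hyx, one_le_dist hyq]
      refine ⟨x, hreach, ?_⟩
      rw [SimpleGraph.dist_self, Nat.cast_zero]
      linarith
  · have hreach : F + 1 + μ * G.dist x q ≤ a x + β := by
      linarith [htoward x hyx, mul_le_mul_of_nonneg_left hdist' hμ]
    exact ⟨x, by linarith [one_le_dist hxq], hreach⟩

lemma Approaching.exists_adj_of_jump (hG : G.Connected) (hμ : 0 ≤ μ) (hab : IsLayerStep G μ a b)
    (hq : ∃ x, G.Adj q x) (hjump : ∀ x, G.Adj q x → a x + 1 / 2 ≤ b q) (hmiss : b q + β < F)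
    (h : Approaching G μ b F q β) : ∃ z, G.Adj q z ∧ Approaching G μ a (F + 1) z β := by
  obtain ⟨y, hnear, hfar⟩ := h.exists_step_of_jump hG hμ hab hjump hmiss
  rcases eq_or_ne y q with rfl | hyq
  · obtain ⟨x, hyx⟩ := hq
    exact ⟨x, hyx, y, by rwa [SimpleGraph.dist_eq_one_iff_adj.2 hyx, Nat.cast_one, mul_one]⟩
  · obtain ⟨z, hqz, hdist⟩ := exists_adj_dist_add_one_le hG hyq.symm
    have hdist' : (G.dist y z : ℝ) ≤ G.dist y q := by
      rw [G.dist_comm, G.dist_comm (u := y)]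
      exact_mod_cast (Nat.le_succ _).trans hdist
    exact ⟨z, hqz, y, by linarith [mul_le_mul_of_nonneg_left hdist' hμ]⟩

end Approaching

lemma Waiting.step (hab : IsLayerStep G μ a b) {T β : ℝ} {s : ℕ → V} {H r : ℕ}
    (hs : ∀ i < H, G.Adj (s i) (s (i + 1))) (h : Waiting b T s H r β) :
    Waiting a T s H r β ∨ T + 1 ≤ a (s H) + β := by
  obtain ⟨i, hri, hiH, hi⟩ := h
  rcases hab.jump_le (s i) with hstay | hclimb
  · exact Or.inl ⟨i, hri, hiH, by linarith⟩
  · have hnext := hclimb _ (hs i hiH)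
    rcases (Nat.succ_le_of_lt hiH).lt_or_eq with hlt | rfl
    · exact Or.inl ⟨i + 1, by omega, hlt, by linarith⟩
    · exact Or.inr (by linarith)

lemma exists_isTrace_one {T S m ρ : ℝ} {q z : V} (hqz : G.Adj q z)
    (hleader : b z + ρ + (μ + 2) ≤ S + m / 2) (hwait : T ≤ b q + ρ)
    (happroach : Approaching G μ b (T + m) z (ρ + μ)) : ∃ s, IsTrace G μ b T S m 1 s ρ := by
  refine ⟨fun | 0 => q | _ + 1 => z, ⟨?_, by simpa using hleader, ?_⟩⟩
  · intro i hi
    obtain rfl : i = 0 := by omega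
    exact hqz
  · intro r hr
    rcases Nat.le_one_iff_eq_zero_or_eq_one.1 hr with rfl | rfl
    · exact Or.inr ⟨0, le_rfl, one_pos, by simpa using hwait⟩
    · exact Or.inl ⟨one_ne_zero, by simpa using happroach⟩

namespace IsTrace

variable {T S m ρ : ℝ} {H : ℕ} {s : ℕ → V}

lemma exists_of_ne (hG : G.Connected) (hμ : 0 ≤ μ) (b : V → ℝ) {v w : V} (hvw : v ≠ w) :
    ∃ H s ρ, IsTrace G μ b (b v) (b w + (μ + 2) * G.dist v w) 0 H s ρ := by
  obtain ⟨p, hp⟩ := hG.exists_walk_length_eq_dist v w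
  refine ⟨p.length, p.getVert, 0, fun i hi ↦ p.adj_getVert_succ hi, ?_, fun r _ ↦ ?_⟩
  · rw [p.getVert_length, hp]
    simp
  · rcases eq_or_ne r 0 with rfl | hr
    · exact Or.inr ⟨0, le_rfl, hp ▸ hG.pos_dist_of_ne hvw, by simp⟩
    · have hdist : (G.dist v (p.getVert r) : ℝ) ≤ r := by exact_mod_cast dist_getVert_le p r
      exact Or.inl ⟨hr, v, by linarith [mul_le_mul_of_nonneg_left hdist hμ]⟩

lemma pos (h : IsTrace G μ b T S m H s ρ) : 0 < H := by
  rcases h.covered 0 (Nat.zero_le H) with ⟨hne, -⟩ | ⟨i, -, hiH, -⟩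
  · exact absurd rfl hne
  · exact Nat.zero_lt_of_lt hiH

lemma approaching_leader (h : IsTrace G μ b T S m H s ρ) :
    Approaching G μ b (T + m) (s H) (ρ + μ * H) := by
  rcases h.covered H le_rfl with ⟨-, happroach⟩ | ⟨i, hHi, hiH, -⟩
  · exact happroach
  · omega

lemma lt_of_gap (h : IsTrace G μ b T S m H s ρ) (hm : 0 ≤ m) (hgap : S + (m + 1) / 2 < T) :
    b (s H) + (ρ + μ * H) < T + m := by
  linarith [h.leader]

/-- A candidate that reaches its target starts waiting there. It cannot reach the leader, by the
assumed gap between `S` and `T`. -/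
lemma covered_step (hG : G.Connected) (hμ : 0 ≤ μ) (hab : IsLayerStep G μ a b) (hm : 0 ≤ m)
    (hgap : S + (m + 1) / 2 < T) (h : IsTrace G μ b T S m H s ρ) {r : ℕ} (hr : r ≤ H) :
    (r ≠ 0 ∧ Approaching G μ a (T + (m + 1)) (s r) (ρ + μ * r)) ∨
      Waiting b T s H r (ρ + μ * r) := by
  rcases h.covered r hr with ⟨hr0, happroach⟩ | hwait
  · rcases happroach.step hG hμ hab with hnext | hhit
    · exact Or.inl ⟨hr0, by rwa [← add_assoc]⟩
    · rcases hr.lt_or_eq with hlt | rfl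
      · exact Or.inr ⟨r, le_rfl, hlt, by linarith⟩
      · linarith [h.lt_of_gap hm hgap]
  · exact Or.inr hwait

lemma approaching_leader_step (hG : G.Connected) (hμ : 0 ≤ μ) (hab : IsLayerStep G μ a b)
    (hm : 0 ≤ m) (hgap : S + (m + 1) / 2 < T) (h : IsTrace G μ b T S m H s ρ) :
    Approaching G μ a (T + (m + 1)) (s H) (ρ + μ * H) := by
  rcases h.covered_step hG hμ hab hm hgap le_rfl with ⟨-, hnext⟩ | ⟨i, hHi, hiH, -⟩
  · exact hnext
  · omega

lemma add_lt_of_no_jump (h : IsTrace G μ b T S m H s ρ) (hgap : S + (m + 1) / 2 < T)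
    (hno_jump : a (s H) - 3 / 2 ≤ b (s H)) : a (s H) + (ρ + μ * H) < T + 1 := by
  linarith [h.leader]

lemma stay (hG : G.Connected) (hμ : 0 ≤ μ) (hab : IsLayerStep G μ a b) (hm : 0 ≤ m)
    (hgap : S + (m + 1) / 2 < T) (h : IsTrace G μ b T S m H s ρ)
    (hstay : a (s H) - 1 / 2 ≤ b (s H)) : IsTrace G μ a T S (m + 1) H s ρ where
  adj := h.adj
  leader := by linarith [h.leader]
  covered r hr := by
    refine (h.covered_step hG hμ hab hm hgap hr).imp_right fun hwait ↦ ?_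
    refine (hwait.step hab h.adj).resolve_right fun hmeet ↦ ?_
    have hrH : μ * r ≤ μ * H := mul_le_mul_of_nonneg_left (by exact_mod_cast hr) hμ
    linarith [h.add_lt_of_no_jump (a := a) hgap (by linarith)]

lemma push (hG : G.Connected) (hμ : 0 ≤ μ) (hab : IsLayerStep G μ a b) (hm : 0 ≤ m)
    (hgap : S + (m + 1) / 2 < T) (h : IsTrace G μ b T S m H s ρ) {x : V} (hx : G.Adj (s H) x)
    (hpush : a x + (μ + 2) - 1 / 2 ≤ b (s H)) :
    IsTrace G μ a T S (m + 1) (H + 1) (Function.update s (H + 1) x) ρ := by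
  have hold {i : ℕ} (hi : i ≤ H) : Function.update s (H + 1) x i = s i :=
    Function.update_of_ne (by omega) _ _
  have hnew : Function.update s (H + 1) x (H + 1) = x := Function.update_self _ _ _
  refine ⟨fun i hi ↦ ?_, ?_, fun r hr ↦ ?_⟩
  · rcases (Nat.lt_succ_iff.1 hi).lt_or_eq with hlt | rfl
    · rw [hold hlt.le, hold hlt]
      exact h.adj i hlt
    · rwa [hold le_rfl, hnew]
  · rw [hnew]
    push_cast
    linarith [h.leader]
  · rcases hr.lt_or_eq with hlt | rfl
    · have hrH : r ≤ H := Nat.lt_succ_iff.1 hlt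
      rw [hold hrH]
      refine (h.covered_step hG hμ hab hm hgap hrH).imp_right fun hwait ↦ ?_
      rcases hwait.step hab h.adj with ⟨i, hri, hiH, hi⟩ | htop
      · exact ⟨i, hri, by omega, by rwa [hold hiH.le]⟩
      · exact ⟨H, hrH, H.lt_succ_self, by rw [hold le_rfl]; linarith⟩
    · refine Or.inl ⟨H.succ_ne_zero, ?_⟩
      rw [hnew]
      exact ((h.approaching_leader_step hG hμ hab hm hgap).of_adj hG hμ hx).mono
        (by push_cast; linarith)

lemma pop {n : ℕ} (hG : G.Connected) (hμ : 0 ≤ μ) (hab : IsLayerStep G μ a b) (hm : 0 ≤ m)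
    (hgap : S + (m + 1) / 2 < T) (h : IsTrace G μ b T S m (n + 1) s ρ)
    (hpop : a (s n) - (μ + 2) - 1 / 2 ≤ b (s (n + 1)))
    (hno_swap : a (s (n + 1)) + (ρ + μ * n) < T + 1) : IsTrace G μ a T S (m + 1) n s ρ := by
  have hleader : a (s n) + ρ + (μ + 2) * n ≤ S + (m + 1) / 2 := by
    have := h.leader
    push_cast at this
    linarith
  refine ⟨fun i hi ↦ h.adj i (by omega), hleader, fun r hr ↦ ?_⟩
  refine (h.covered_step hG hμ hab hm hgap (by omega)).imp_right fun hwait ↦ ?_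
  have hrn : μ * r ≤ μ * n := mul_le_mul_of_nonneg_left (by exact_mod_cast hr) hμ
  rcases hwait.step hab h.adj with ⟨i, hri, hin, hi⟩ | hswap
  · rcases (Nat.lt_succ_iff.1 hin).lt_or_eq with hlt | rfl
    · exact ⟨i, hri, hlt, hi⟩
    · linarith
  · linarith

/-- If the waiting candidate and the jumping leader swap their positions, the old leader position
becomes the bottom of a new stack, and the leader turns to a neighbour on the side of the
approaching candidate. -/
lemma exists_of_swap {n : ℕ} (hG : G.Connected) (hμ : 0 ≤ μ) (hab : IsLayerStep G μ a b)
    (hm : 0 ≤ m) (hgap : S + (m + 1) / 2 < T) (h : IsTrace G μ b T S m (n + 1) s ρ)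
    (hjump : ∀ x, G.Adj (s (n + 1)) x → a x + 1 / 2 ≤ b (s (n + 1)))
    (hswap : T + 1 ≤ a (s (n + 1)) + (ρ + μ * n)) :
    ∃ H s ρ, IsTrace G μ a T S (m + 1) H s ρ := by
  obtain ⟨z, hz, happroach⟩ := h.approaching_leader.exists_adj_of_jump hG hμ hab
    ⟨s n, (h.adj n n.lt_succ_self).symm⟩ hjump (h.lt_of_gap hm hgap)
  have hleader := h.leader
  push_cast at hleader happroach
  obtain ⟨s', hs'⟩ := exists_isTrace_one (μ := μ) (b := a) (T := T) (S := S) (m := m + 1)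
    (ρ := ρ + 1 + (μ + 2) * n) hz (by linarith [hjump z hz]) (by linarith)
    (by rw [← add_assoc]; exact happroach.mono (by linarith))
  exact ⟨1, s', _, hs'⟩

lemma exists_step (hG : G.Connected) (hμ : 0 ≤ μ) (hab : IsLayerStep G μ a b) (hm : 0 ≤ m)
    (hgap : S + (m + 1) / 2 < T) (h : IsTrace G μ b T S m H s ρ) :
    ∃ H s ρ, IsTrace G μ a T S (m + 1) H s ρ := by
  obtain ⟨n, rfl⟩ := Nat.exists_eq_succ_of_ne_zero h.pos.ne'
  have hpred : G.Adj (s (n + 1)) (s n) := (h.adj n n.lt_succ_self).symm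
  rcases hab.le_jump (s (n + 1)) with hno_jump | hjump
  · rcases hab.slow (s (n + 1)) with hstay | hpop | ⟨x, hx, hpush⟩
    · exact ⟨_, _, _, h.stay hG hμ hab hm hgap hstay⟩
    · have hno_swap := h.add_lt_of_no_jump hgap hno_jump
      push_cast at hno_swap
      exact ⟨_, _, _, h.pop hG hμ hab hm hgap (hpop _ hpred) (by linarith)⟩
    · exact ⟨_, _, _, h.push hG hμ hab hm hgap hx hpush⟩
  · rcases lt_or_ge (a (s (n + 1)) + (ρ + μ * n)) (T + 1) with hno_swap | hswap
    · exact ⟨_, _, _, h.pop hG hμ hab hm hgap (by linarith [hjump _ hpred]) hno_swap⟩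
    · exact h.exists_of_swap hG hμ hab hm hgap hjump hswap

lemma sub_le_two_mul {D : ℝ} (hD : ∀ v w, (G.dist v w : ℝ) ≤ D)
    (hskew : ∀ v w, b v - b w - (μ + 2) * G.dist v w ≤ m / 2)
    (h : IsTrace G μ b T S m H s ρ) : T - S ≤ 2 * D := by
  obtain ⟨y, hy⟩ := h.approaching_leader
  linarith [h.leader, hD y (s H), hskew y (s H)]

end IsTrace

section Layers

variable {τ : ℕ → V → ℝ}

lemma exists_isTrace_of_gap (hG : G.Connected) (hμ : 0 ≤ μ)
    (hτ : ∀ ℓ, IsLayerStep G μ (τ ℓ) (τ (ℓ + 1))) {v w : V} (hvw : v ≠ w) (m k : ℕ)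
    (hgap : τ (k + m) w + (μ + 2) * G.dist v w + m / 2 < τ (k + m) v) :
    ∃ H s ρ, IsTrace G μ (τ k) (τ (k + m) v) (τ (k + m) w + (μ + 2) * G.dist v w) m H s ρ := by
  induction m generalizing k with
  | zero => simpa using IsTrace.exists_of_ne hG hμ (τ k) hvw
  | succ m ih =>
    rw [Nat.add_comm m 1, ← Nat.add_assoc, Nat.add_comm 1 m] at hgap ⊢
    push_cast at hgap ⊢
    obtain ⟨H, s, ρ, h⟩ := ih (k + 1) (by linarith)
    exact h.exists_step hG hμ (hτ k) m.cast_nonneg hgap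

theorem sub_le_two_mul_of_isLayerStep (hG : G.Connected) (hμ : 0 ≤ μ) {D : ℕ}
    (hD : ∀ v w, G.dist v w ≤ D) (hτ : ∀ ℓ, IsLayerStep G μ (τ ℓ) (τ (ℓ + 1)))
    (h0 : ∀ v w, τ 0 v - τ 0 w ≤ (μ + 2) * G.dist v w) (ℓ : ℕ) (v w : V) :
    τ ℓ v - τ ℓ w - (μ + 2) * G.dist v w ≤ 2 * D := by
  induction ℓ using Nat.strong_induction_on generalizing v w with
  | _ ℓ ih =>
  rcases eq_or_ne v w with rfl | hvw
  · simp
  by_contra! hlarge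
  have hDpos : 0 < D := (hG.pos_dist_of_ne hvw).trans_le (hD v w)
  obtain ⟨k, m, rfl, hm, hkm⟩ : ∃ k m, ℓ = k + m ∧ m ≤ 4 * D ∧ (k = 0 ∨ m = 4 * D) :=
    ⟨ℓ - min ℓ (4 * D), min ℓ (4 * D), by omega, by omega, by omega⟩
  have hm' : (m : ℝ) ≤ 4 * D := by exact_mod_cast hm
  obtain ⟨H, s, ρ, htrace⟩ := exists_isTrace_of_gap hG hμ hτ hvw m k (by linarith)
  have hearlier (x y : V) : τ k x - τ k y - (μ + 2) * G.dist x y ≤ m / 2 := by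
    rcases hkm with rfl | rfl
    · linarith [h0 x y, (m.cast_nonneg : (0 : ℝ) ≤ m)]
    · push_cast
      linarith [ih k (by omega) x y]
  have := htrace.sub_le_two_mul (D := D) (fun x y ↦ by exact_mod_cast hD x y) hearlier
  linarith

end Layers

lemma sub_div_le_sub_div_add_iff {κ : ℝ} (hκ : 0 < κ) (x y α Λ c : ℝ) :
    (x - (α + Λ)) / κ ≤ (y - α) / κ + c ↔ x ≤ y + Λ + c * κ := by
  rw [div_add' _ _ _ hκ.ne', div_le_div_iff_of_pos_right hκ]
  constructor <;> intro h <;> linarith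

lemma sub_div_add_le_sub_div_iff {κ : ℝ} (hκ : 0 < κ) (x y α Λ c : ℝ) :
    (y - α) / κ + c ≤ (x - (α + Λ)) / κ ↔ y + Λ + c * κ ≤ x := by
  rw [div_add' _ _ _ hκ.ne', div_le_div_iff_of_pos_right hκ]
  constructor <;> intro h <;> linarith

lemma kappa_pos {ϑ u d Λ : ℝ} (hϑ : 1 < ϑ) (hu : 0 ≤ u) (hΛ : d < Λ) :
    0 < 2 * (u + (1 - 1 / ϑ) * (Λ - d)) := by
  have hdrift : 0 < (1 - 1 / ϑ) * (Λ - d) :=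
    mul_pos (sub_pos.2 ((div_lt_one (one_pos.trans hϑ)).2 hϑ)) (sub_pos.2 hΛ)
  linarith

lemma drift_lower_bound_eq {ϑ u d Λ κ : ℝ} (hκ : κ = 2 * (u + (1 - 1 / ϑ) * (Λ - d))) (c : ℝ) :
    d - u + (Λ - d - c) / ϑ = Λ - κ / 2 - c / ϑ := by
  rw [hκ]
  ring

lemma isLayerStep_of_correction {ϑ Λ κ s : ℝ} (hϑ : 0 < ϑ) (hκ : 0 < κ) {t t' C : V → ℝ} (α : ℝ)
    (hlower : ∀ v, t v + Λ - κ / 2 - C v / ϑ ≤ t' v) (hupper : ∀ v, t' v ≤ t v + Λ - C v)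
    (hSC : ∀ v, (∀ w, G.Adj v w → C v / ϑ ≤ t v - t w + 4 * s * κ) ∨
      (∃ w, G.Adj v w ∧ C v / ϑ ≤ t v - t w - 4 * s * κ) ∨ C v ≤ 0)
    (hFC : ∀ v, (∃ w, G.Adj v w ∧ t v - t w + (4 * s - 2) * κ + κ ≤ C v) ∨
      (∀ w, G.Adj v w → t v - t w - (4 * s - 2) * κ + κ ≤ C v) ∨ κ ≤ C v)
    (hJC : ∀ v, (κ < C v / ϑ ∧ ∀ w, G.Adj v w → C v / ϑ ≤ t v - t w - κ) ∨
      (C v < 0 ∧ ∀ w, G.Adj v w → t v - t w + κ ≤ C v) ∨ (0 ≤ C v / ϑ ∧ C v / ϑ ≤ κ)) :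
    IsLayerStep G (4 * s - 2) (fun v ↦ (t v - α) / κ) (fun v ↦ (t' v - (α + Λ)) / κ) := by
  have le_add (p x : V) (c : ℝ) := (sub_div_le_sub_div_add_iff hκ (t' p) (t x) α Λ c).2
  have add_le (q x : V) (c : ℝ) := (sub_div_add_le_sub_div_iff hκ (t' q) (t x) α Λ c).2
  have div_nonpos {c : ℝ} (hc : c ≤ 0) : c / ϑ ≤ 0 := div_nonpos_of_nonpos_of_nonneg hc hϑ.le
  constructor
  case fast =>
    intro p
    rcases hFC p with ⟨x, hx, hC⟩ | hC | hC
    · exact Or.inr (Or.inl ⟨x, hx, by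
        linarith [le_add p x (-(4 * s - 2) - 1) (by linarith [hupper p])]⟩)
    · exact Or.inr (Or.inr fun x hx ↦ by
        linarith [le_add p x (4 * s - 2 - 1) (by linarith [hupper p, hC x hx])])
    · exact Or.inl (by linarith [le_add p p (-1) (by linarith [hupper p])])
  case slow =>
    intro q
    rcases hSC q with hC | ⟨x, hx, hC⟩ | hC
    · exact Or.inr (Or.inl fun x hx ↦ by
        linarith [add_le q x (-(4 * s) - 1 / 2) (by linarith [hlower q, hC x hx])])
    · exact Or.inr (Or.inr ⟨x, hx, by
        linarith [add_le q x (4 * s - 1 / 2) (by linarith [hlower q])]⟩)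
    · exact Or.inl (by linarith [add_le q q (-1 / 2) (by linarith [hlower q, div_nonpos hC])])
  case jump_le =>
    intro p
    by_cases hC : 0 ≤ C p
    · exact Or.inl (by linarith [le_add p p 0 (by linarith [hupper p])])
    · right
      intro x hx
      rcases hJC p with ⟨hpos, -⟩ | ⟨-, hjump⟩ | ⟨hnonneg, -⟩
      · linarith [div_nonpos (not_le.1 hC).le]
      · linarith [le_add p x (-1) (by linarith [hupper p, hjump x hx])]
      · linarith [div_neg_of_neg_of_pos (not_le.1 hC) hϑ]
  case le_jump =>
    intro q
    have no_jump (hC : C q / ϑ ≤ κ) : (t q - α) / κ - 3 / 2 ≤ (t' q - (α + Λ)) / κ := by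
      linarith [add_le q q (-3 / 2) (by linarith [hlower q])]
    rcases hJC q with ⟨-, hjump⟩ | ⟨hC, -⟩ | ⟨-, hC⟩
    · exact Or.inr fun x hx ↦ by linarith [add_le q x (1 / 2) (by linarith [hlower q, hjump x hx])]
    · exact Or.inl (no_jump (by linarith [div_nonpos hC.le]))
    · exact Or.inl (no_jump hC)

end GradientTrix

open GradientTrix in
theorem stmt9_general
    (ϑ u d Λ κ s : ℝ)
    (hϑ : 1 < ϑ) (hu : 0 ≤ u) (hΛ : d < Λ)
    (hκ : κ = 2 * (u + (1 - 1 / ϑ) * (Λ - d))) (hs : 1 / 2 ≤ s)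
    {V : Type*} (G : SimpleGraph V) (hconn : G.Connected)
    (D : ℕ) (hdiam : ∀ v w : V, G.dist v w ≤ D)
    (t : V → ℕ → ℝ) (C : V → ℕ → ℝ)
    (hDRIFT : ∀ (v : V) (ℓ : ℕ),
      d - u + (Λ - d - C v (ℓ + 1)) / ϑ ≤ t v (ℓ + 1) - t v ℓ ∧
      t v (ℓ + 1) - t v ℓ ≤ Λ - C v (ℓ + 1))
    (hSC : ∀ (v : V) (ℓ : ℕ),
      (∀ w : V, G.Adj v w → C v (ℓ + 1) / ϑ ≤ t v ℓ - t w ℓ + 4 * s * κ) ∨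
      (∃ w : V, G.Adj v w ∧ C v (ℓ + 1) / ϑ ≤ t v ℓ - t w ℓ - 4 * s * κ) ∨
      C v (ℓ + 1) ≤ 0)
    (hFC : ∀ (v : V) (ℓ : ℕ),
      (∃ w : V, G.Adj v w ∧ t v ℓ - t w ℓ + (4 * s - 2) * κ + κ ≤ C v (ℓ + 1)) ∨
      (∀ w : V, G.Adj v w → t v ℓ - t w ℓ - (4 * s - 2) * κ + κ ≤ C v (ℓ + 1)) ∨
      κ ≤ C v (ℓ + 1))
    (hJC : ∀ (v : V) (ℓ : ℕ),
      (κ < C v (ℓ + 1) / ϑ ∧ ∀ w : V, G.Adj v w → C v (ℓ + 1) / ϑ ≤ t v ℓ - t w ℓ - κ) ∨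
      (C v (ℓ + 1) < 0 ∧ ∀ w : V, G.Adj v w → t v ℓ - t w ℓ + κ ≤ C v (ℓ + 1)) ∨
      (0 ≤ C v (ℓ + 1) / ϑ ∧ C v (ℓ + 1) / ϑ ≤ κ))
    (hL0 : ∀ v w : V, G.Adj v w → |t v 0 - t w 0| ≤ 4 * s * κ)
    (ℓ : ℕ) (v w : V) : t v ℓ - t w ℓ - 4 * s * κ * G.dist v w ≤ 2 * κ * D := by
  have hϑ0 : 0 < ϑ := one_pos.trans hϑ
  have hκ0 : 0 < κ := hκ ▸ kappa_pos hϑ hu hΛ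
  have hlower (v : V) (ℓ : ℕ) : t v ℓ + Λ - κ / 2 - C v (ℓ + 1) / ϑ ≤ t v (ℓ + 1) := by
    linarith [(hDRIFT v ℓ).1, drift_lower_bound_eq hκ (C v (ℓ + 1))]
  let τ (ℓ : ℕ) (v : V) : ℝ := (t v ℓ - ℓ * Λ) / κ
  have hτ (ℓ : ℕ) : IsLayerStep G (4 * s - 2) (τ ℓ) (τ (ℓ + 1)) := by
    have hstep := isLayerStep_of_correction hϑ0 hκ0 (ℓ * Λ) (hlower · ℓ)
      (fun v ↦ by linarith [(hDRIFT v ℓ).2]) (hSC · ℓ) (hFC · ℓ) (hJC · ℓ)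
    simpa [τ, add_mul] using hstep
  have hτ_sub (ℓ : ℕ) (v w : V) : t v ℓ - t w ℓ = κ * (τ ℓ v - τ ℓ w) := by
    simp only [τ]
    field_simp
    ring
  have h0 (v w : V) : τ 0 v - τ 0 w ≤ (4 * s - 2 + 2) * G.dist v w := by
    refine sub_le_mul_dist hconn (fun v w hvw ↦ ?_) v w
    refine le_of_mul_le_mul_left ?_ hκ0
    linarith [hτ_sub 0 v w, le_of_abs_le (hL0 v w hvw)]
  have hskew := sub_le_two_mul_of_isLayerStep hconn (by linarith) hdiam hτ h0 ℓ v w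
  linarith [hτ_sub ℓ v w, mul_le_mul_of_nonneg_left hskew hκ0.le]

/-- The `tmax`/`tmin` over neighbours in the SC/FC/JC conditions are expressed
pointwise over the (nonempty) neighbourhood, which is equivalent. -/
theorem stmt9
    (ϑ u d Λ κ : ℝ)
    (hϑ : 1 < ϑ) (hu : 0 ≤ u) (hd : u ≤ d) (hΛ : d < Λ)
    (hκ : κ = 2 * (u + (1 - 1/ϑ) * (Λ - d)))
    {V : Type*} [Fintype V] [Nonempty V]
    (G : SimpleGraph V) [DecidableRel G.Adj]
    (hconn : G.Connected) (hdeg : ∀ v : V, 2 ≤ G.degree v)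
    (D : ℕ) (hD : 1 ≤ D) (hdiam : ∀ v w : V, G.dist v w ≤ D)
    (t : V → ℕ → ℝ) (C : V → ℕ → ℝ)
    (hDRIFT : ∀ (v : V) (ℓ : ℕ),
      d - u + (Λ - d - C v (ℓ+1)) / ϑ ≤ t v (ℓ+1) - t v ℓ ∧
      t v (ℓ+1) - t v ℓ ≤ Λ - C v (ℓ+1))
    (hSC : ∀ (s : ℕ) (v : V) (ℓ : ℕ),
      (∀ w : V, G.Adj v w → C v (ℓ+1) / ϑ ≤ t v ℓ - t w ℓ + 4*(s:ℝ)*κ) ∨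
      (∃ w : V, G.Adj v w ∧ C v (ℓ+1) / ϑ ≤ t v ℓ - t w ℓ - 4*(s:ℝ)*κ) ∨
      C v (ℓ+1) ≤ 0)
    (hFC : ∀ (s : ℕ), 1 ≤ s → ∀ (v : V) (ℓ : ℕ),
      (∃ w : V, G.Adj v w ∧ t v ℓ - t w ℓ + (4*(s:ℝ)-2)*κ + κ ≤ C v (ℓ+1)) ∨
      (∀ w : V, G.Adj v w → t v ℓ - t w ℓ - (4*(s:ℝ)-2)*κ + κ ≤ C v (ℓ+1)) ∨
      κ ≤ C v (ℓ+1))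
    (hJC : ∀ (v : V) (ℓ : ℕ),
      (κ < C v (ℓ+1)/ϑ ∧ ∀ w : V, G.Adj v w → C v (ℓ+1)/ϑ ≤ t v ℓ - t w ℓ - κ) ∨
      (C v (ℓ+1) < 0 ∧ ∀ w : V, G.Adj v w → t v ℓ - t w ℓ + κ ≤ C v (ℓ+1)) ∨
      (0 ≤ C v (ℓ+1)/ϑ ∧ C v (ℓ+1)/ϑ ≤ κ))
    (hL0 : ∀ v w : V, G.Adj v w → |t v 0 - t w 0| ≤ 4*κ) :
    ∀ (ℓ : ℕ) (v w : V), t v ℓ - t w ℓ - 4*κ*(G.dist v w : ℝ) ≤ 2*κ*(D:ℝ) := by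
  intro ℓ v w
  simpa using stmt9_general ϑ u d Λ κ (1 : ℕ) hϑ hu hΛ hκ (by norm_num) G hconn D hdiam t C hDRIFT
    (hSC 1) (hFC 1 le_rfl) hJC (by simpa using hL0) ℓ v w
end

section
/- Under the standing assumptions, let s ≥ 1 be an integer and Ψ a real with Ψ^{s−1}(ℓ) ≤ Ψ for all ℓ ∈ ℕ. Then for every ℓ ∈ ℕ: if ℓ < Ψ/κ then Ψ^s(ℓ) ≤ Ξ^s(0) + Ψ/2, and if ℓ ≥ Ψ/κ then Ψ^s(ℓ) ≤ Ψ/2. -/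
/-!
Write `σ = 4sκ`, `τ = (4s - 2)κ`, and follow a skew `P = ψ^s_{v,w}(ℓ)` backwards through the
layers, keeping an anchor `a`, a late node `p` and an early node `x`, initially `a = p = v` and
`x = w`. Up to the potentials `τ * dist a p` and `σ * dist a x`, going back one layer lowers the
time of `p` by at most `Λ - κ` (fast condition), that of `x` by at least `Λ - κ / 2` (slow
condition) and that of `a` by at most `Λ` (jump condition), unless the two ends of the edge
`{a, x}` jump past each other and swap roles. Hence after `m` layers `p` leads `x` by at least
`P + m * κ / 2`, while `a` leads `x` by at least `P - m * κ / 2`. If `x` ever meets `a`, the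
latter gives `P ≤ m * κ / 2`. Otherwise the triangle inequality through `a ≠ x` turns the former
into `P + m * κ / 2 + 2 * κ ≤ ξ^s_{p,x}`. Take `m = ℓ` to compare with layer `0`, and
`m = ⌊Ψ / κ⌋` to use `ξ^s ≤ ψ^{s-1} ≤ Ψ`.
-/

section Graph

variable {V : Type*} {G : SimpleGraph V} {u v w : V}

lemma exists_adj_dist_add_one_eq (h : G.Reachable u v) (hne : u ≠ v) :
    ∃ b, G.Adj u b ∧ G.dist b v + 1 = G.dist u v := by
  obtain ⟨walk, hwalk⟩ := h.exists_walk_length_eq_dist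
  cases walk with
  | nil => exact absurd rfl hne
  | cons hadj tail =>
    refine ⟨_, hadj, ?_⟩
    have htail := SimpleGraph.dist_le tail
    have hdiff := hadj.symm.diff_dist_adj (u := v)
    rw [SimpleGraph.Walk.length_cons] at hwalk
    simp only [SimpleGraph.dist_comm (u := v)] at hdiff
    omega

lemma dist_le_dist_add_one_of_adj (h : G.Adj v w) : G.dist u w ≤ G.dist u v + 1 := by
  have := h.diff_dist_adj (u := u)
  omega

end Graph

/-- The constraints that one layer imposes on the pulse times `T` of a layer and `T'` of the next,
with the corrections eliminated: `slow` and `fast` come from SC and FC with thresholds `σ` and `τ`,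
and the two `jump` fields from JC. -/
structure IsLayerStep {V : Type*} (G : SimpleGraph V) (κ Λ τ σ : ℝ) (T T' : V → ℝ) : Prop where
  slow (v : V) : (∀ w, G.Adj v w → T w + Λ - κ / 2 - σ ≤ T' v) ∨
    (∃ w, G.Adj v w ∧ T w + Λ - κ / 2 + σ ≤ T' v) ∨ T v + Λ - κ / 2 ≤ T' v
  fast (v : V) : (∃ w, G.Adj v w ∧ T' v ≤ T w + Λ - κ - τ) ∨
    (∀ w, G.Adj v w → T' v ≤ T w + Λ - κ + τ) ∨ T' v ≤ T v + Λ - κ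
  jump_le (v : V) : T' v ≤ T v + Λ ∨ ∀ w, G.Adj v w → T' v ≤ T w + Λ - κ
  le_jump (v : V) : T v + Λ - 3 * κ / 2 ≤ T' v ∨ ∀ w, G.Adj v w → T w + Λ + κ / 2 ≤ T' v

/-- `P` is witnessed, with tolerance `c`, by the anchor `a`, the late node `p` and the early node
`x` of a layer with pulse times `T`. -/
structure IsTrace {V : Type*} (G : SimpleGraph V) (τ σ : ℝ) (T : V → ℝ) (P c : ℝ) (a p x : V) :
    Prop where
  late : P + c ≤ T p - T x - τ * G.dist a p - σ * G.dist a x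
  anchor : P - c ≤ T a - T x - σ * G.dist a x

/-- The invariant of the backward trace: `P` is either within the tolerance `c` or witnessed by a
trace whose early node has not met its anchor. -/
def IsTraceable {V : Type*} (G : SimpleGraph V) (τ σ : ℝ) (T : V → ℝ) (P c : ℝ) : Prop :=
  P ≤ c ∨ ∃ a p x, a ≠ x ∧ IsTrace G τ σ T P c a p x

section Trace

variable {V : Type*} {G : SimpleGraph V} {κ Λ τ σ P c : ℝ} {T T' : V → ℝ} {a p x y : V}

lemma IsTrace.isTraceable (h : IsTrace G τ σ T P c a p x) : IsTraceable G τ σ T P c := by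
  by_cases hax : a = x
  · subst hax
    have hanchor := h.anchor
    rw [SimpleGraph.dist_self, Nat.cast_zero] at hanchor
    exact Or.inl (by linarith)
  · exact Or.inr ⟨a, p, x, hax, h⟩

lemma isTraceable_zero (v w : V) :
    IsTraceable G τ σ T (T v - T w - σ * G.dist v w) 0 := by
  have h : IsTrace G τ σ T (T v - T w - σ * G.dist v w) 0 v v w :=
    ⟨by simp, by simp⟩
  exact h.isTraceable

lemma IsTraceable.le_or_exists_add_le (hconn : G.Connected) (hτ : 0 ≤ τ) (hτσ : τ ≤ σ)
    (h : IsTraceable G τ σ T P c) :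
    P ≤ c ∨ ∃ p x, P + c + (σ - τ) ≤ T p - T x - τ * G.dist p x := by
  refine h.imp_right ?_
  rintro ⟨a, p, x, hax, htrace⟩
  have htriangle : (G.dist p x : ℝ) ≤ G.dist a p + G.dist a x := by
    rw [SimpleGraph.dist_comm (u := a) (v := p)]
    exact_mod_cast hconn.dist_triangle
  have hpos : (1 : ℝ) ≤ G.dist a x := by exact_mod_cast hconn.pos_dist_of_ne hax
  refine ⟨p, x, ?_⟩
  have hτ_triangle := mul_le_mul_of_nonneg_left htriangle hτ
  have hσ_pos := mul_le_mul_of_nonneg_left hpos (sub_nonneg.mpr hτσ)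
  linarith [htrace.late]

namespace IsLayerStep

lemma exists_early (h : IsLayerStep G κ Λ τ σ T T') (hconn : G.Connected) (hσ : 0 ≤ σ)
    (hax : a ≠ x) :
    ∃ y, (y = x ∨ G.Adj x y) ∧
      T y + σ * G.dist a y + (Λ - κ / 2) ≤ T' x + σ * G.dist a x := by
  rcases h.slow x with hall | ⟨y, hxy, hy⟩ | hx
  · obtain ⟨y, hxy, hdist⟩ := exists_adj_dist_add_one_eq (hconn x a) hax.symm
    refine ⟨y, Or.inr hxy, ?_⟩
    rw [SimpleGraph.dist_comm (u := a), SimpleGraph.dist_comm (u := a), ← hdist]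
    push_cast
    linarith [hall y hxy]
  · have hdist : (G.dist a y : ℝ) ≤ G.dist a x + 1 := by
      exact_mod_cast dist_le_dist_add_one_of_adj hxy
    exact ⟨y, Or.inr hxy, by linarith [mul_le_mul_of_nonneg_left hdist hσ]⟩
  · exact ⟨x, Or.inl rfl, by linarith⟩

lemma exists_late (h : IsLayerStep G κ Λ τ σ T T') (hconn : G.Connected) (hτ : 0 ≤ τ) (a p : V) :
    (∃ q, T' p - τ * G.dist a p ≤ T q - τ * G.dist a q + (Λ - κ)) ∨
      (p = a ∧ ∀ b, G.Adj a b → T' a ≤ T b + (Λ - κ) + τ) := by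
  rcases h.fast p with ⟨q, hpq, hq⟩ | hall | hp
  · have hdist : (G.dist a q : ℝ) ≤ G.dist a p + 1 := by
      exact_mod_cast dist_le_dist_add_one_of_adj hpq
    exact Or.inl ⟨q, by linarith [mul_le_mul_of_nonneg_left hdist hτ]⟩
  · by_cases hpa : p = a
    · subst hpa
      exact Or.inr ⟨rfl, fun b hb => by linarith [hall b hb]⟩
    · obtain ⟨q, hpq, hdist⟩ := exists_adj_dist_add_one_eq (hconn p a) hpa
      refine Or.inl ⟨q, ?_⟩
      rw [SimpleGraph.dist_comm (u := a), SimpleGraph.dist_comm (u := a), ← hdist]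
      push_cast
      linarith [hall q hpq]
  · exact Or.inl ⟨p, by linarith⟩

lemma isTraceable_of_early_ne (h : IsLayerStep G κ Λ τ σ T T') (hconn : G.Connected)
    (hκ : 0 ≤ κ) (hτ : 0 ≤ τ) (hτσ : τ ≤ σ) (htrace : IsTrace G τ σ T' P c a p x) (hay : a ≠ y)
    (hy : T y + σ * G.dist a y + (Λ - κ / 2) ≤ T' x + σ * G.dist a x) :
    IsTraceable G τ σ T P (c + κ / 2) := by
  obtain ⟨hlate, hanchor⟩ := htrace
  obtain ⟨b, hab, hby⟩ := exists_adj_dist_add_one_eq (hconn a y) hay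
  have hσ_by : σ * G.dist a y = σ * G.dist b y + σ := by
    rw [← hby]
    push_cast
    ring
  rcases h.exists_late hconn hτ a p with ⟨q, hq⟩ | ⟨rfl, hall⟩
  · rcases h.jump_le a with ha | hjump
    · have hnew : IsTrace G τ σ T P (c + κ / 2) a q y := ⟨by linarith, by linarith⟩
      exact hnew.isTraceable
    · have hbq : (G.dist b q : ℝ) ≤ G.dist a q + 1 := by
        rw [SimpleGraph.dist_comm (u := b), SimpleGraph.dist_comm (u := a)]
        exact_mod_cast dist_le_dist_add_one_of_adj hab
      have hτ_bq := mul_le_mul_of_nonneg_left hbq hτ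
      have hb := hjump b hab
      have hnew : IsTrace G τ σ T P (c + κ / 2) b q y := ⟨by linarith, by linarith⟩
      exact hnew.isTraceable
  · have hb := hall b hab
    rw [SimpleGraph.dist_self, Nat.cast_zero] at hlate
    have hnew : IsTrace G τ σ T P (c + κ / 2) b b y :=
      ⟨by rw [SimpleGraph.dist_self, Nat.cast_zero]; linarith, by linarith⟩
    exact hnew.isTraceable

/-- When both ends of the edge `{a, x}` jump, they swap roles: `a` becomes the early node and the
anchor moves to a neighbour of `a`. -/
lemma isTraceable_of_jump (h : IsLayerStep G κ Λ τ σ T T') (hconn : G.Connected)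
    (hκ : 0 ≤ κ) (hτ : 0 ≤ τ) (hσ : 0 ≤ σ) (hc : 0 ≤ c) (htrace : IsTrace G τ σ T' P c a p x)
    (hax : G.Adj a x) (ha : ∀ b, G.Adj a b → T' a ≤ T b + Λ - κ)
    (hx : T a + Λ + κ / 2 ≤ T' x) :
    IsTraceable G τ σ T P (c + κ / 2) := by
  obtain ⟨hlate, hanchor⟩ := htrace
  rw [SimpleGraph.dist_eq_one_iff_adj.mpr hax, Nat.cast_one] at hlate hanchor
  have dist_anchor {b : V} (hab : G.Adj a b) : (G.dist b a : ℝ) = 1 := by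
    rw [SimpleGraph.dist_eq_one_iff_adj.mpr hab.symm, Nat.cast_one]
  rcases h.exists_late hconn hτ a p with ⟨q, hq⟩ | ⟨rfl, -⟩
  · by_cases haq : a = q
    · subst haq
      rw [SimpleGraph.dist_self, Nat.cast_zero] at hq
      exact Or.inl (by linarith)
    · obtain ⟨b, hab, hbq⟩ := exists_adj_dist_add_one_eq (hconn a q) haq
      have hb := ha b hab
      rw [← hbq] at hq
      push_cast at hq
      have hnew : IsTrace G τ σ T P (c + κ / 2) b q a :=
        ⟨by rw [dist_anchor hab]; linarith, by rw [dist_anchor hab]; linarith⟩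
      exact hnew.isTraceable
  · have hb := ha x hax
    rw [SimpleGraph.dist_self, Nat.cast_zero] at hlate
    have hnew : IsTrace G τ σ T P (c + κ / 2) x x p :=
      ⟨by rw [dist_anchor hax, SimpleGraph.dist_self, Nat.cast_zero]; linarith,
        by rw [dist_anchor hax]; linarith⟩
    exact hnew.isTraceable

lemma isTraceable_of_early_eq (h : IsLayerStep G κ Λ τ σ T T') (hconn : G.Connected)
    (hκ : 0 ≤ κ) (hτ : 0 ≤ τ) (hσ : 0 ≤ σ) (hc : 0 ≤ c) (htrace : IsTrace G τ σ T' P c a p x)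
    (hax : G.Adj a x) (ha : T a + (Λ - κ / 2) ≤ T' x + σ) :
    IsTraceable G τ σ T P (c + κ / 2) := by
  have hanchor := htrace.anchor
  rw [SimpleGraph.dist_eq_one_iff_adj.mpr hax, Nat.cast_one] at hanchor
  rcases h.jump_le a with hslow | hjump
  · exact Or.inl (by linarith)
  rcases h.le_jump x with hfast | hjump'
  · exact Or.inl (by linarith [hjump x hax])
  exact h.isTraceable_of_jump hconn hκ hτ hσ hc htrace hax hjump (hjump' a hax.symm)

lemma isTraceable (h : IsLayerStep G κ Λ τ σ T T') (hconn : G.Connected)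
    (hκ : 0 ≤ κ) (hτ : 0 ≤ τ) (hτσ : τ ≤ σ) (hc : 0 ≤ c) (hP : IsTraceable G τ σ T' P c) :
    IsTraceable G τ σ T P (c + κ / 2) := by
  have hσ : 0 ≤ σ := hτ.trans hτσ
  rcases hP with hP | ⟨a, p, x, hax, htrace⟩
  · exact Or.inl (by linarith)
  obtain ⟨y, hxy, hy⟩ := h.exists_early hconn hσ hax
  by_cases hay : a = y
  · subst hay
    have hadj : G.Adj a x := (hxy.resolve_left hax).symm
    rw [SimpleGraph.dist_self, SimpleGraph.dist_eq_one_iff_adj.mpr hadj] at hy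
    push_cast at hy
    exact h.isTraceable_of_early_eq hconn hκ hτ hσ hc htrace hadj (by linarith)
  · exact h.isTraceable_of_early_ne hconn hκ hτ hτσ htrace hay hy

end IsLayerStep

lemma IsTraceable.of_layers {t : V → ℕ → ℝ} (hconn : G.Connected)
    (hκ : 0 ≤ κ) (hτ : 0 ≤ τ) (hτσ : τ ≤ σ)
    (hstep : ∀ ℓ, IsLayerStep G κ Λ τ σ (t · ℓ) (t · (ℓ + 1))) (hc : 0 ≤ c) (ℓ m : ℕ)
    (hP : IsTraceable G τ σ (t · (ℓ + m)) P c) :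
    IsTraceable G τ σ (t · ℓ) P (c + m * κ / 2) := by
  induction m generalizing c with
  | zero => simpa using hP
  | succ m ih =>
    have hprev := ih (by positivity) ((hstep (ℓ + m)).isTraceable hconn hκ hτ hτσ hc hP)
    convert hprev using 1
    push_cast
    ring

lemma skew_le_or_exists_skew_ge {t : V → ℕ → ℝ} (hconn : G.Connected)
    (hκ : 0 ≤ κ) (hτ : 0 ≤ τ) (hτσ : τ ≤ σ)
    (hstep : ∀ ℓ, IsLayerStep G κ Λ τ σ (t · ℓ) (t · (ℓ + 1))) (ℓ m : ℕ) (v w : V) :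
    t v (ℓ + m) - t w (ℓ + m) - σ * G.dist v w ≤ m * κ / 2 ∨
      ∃ p x, t v (ℓ + m) - t w (ℓ + m) - σ * G.dist v w + m * κ / 2 + (σ - τ) ≤
        t p ℓ - t x ℓ - τ * G.dist p x := by
  have htraceable := (isTraceable_zero v w).of_layers hconn hκ hτ hτσ hstep le_rfl ℓ m
  rw [zero_add] at htraceable
  exact htraceable.le_or_exists_add_le hconn hτ hτσ

end Trace

section Conditions

variable {V : Type*} {G : SimpleGraph V} {ϑ u d Λ κ τ σ : ℝ} {T T' C : V → ℝ}

lemma add_sub_half_kappa_sub_le_of_drift {t₀ t₁ c : ℝ} (hκ : κ = 2 * (u + (1 - 1 / ϑ) * (Λ - d)))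
    (hdrift : d - u + (Λ - d - c) / ϑ ≤ t₁ - t₀) :
    t₀ + Λ - κ / 2 - c / ϑ ≤ t₁ := by
  have hsplit : (Λ - d - c) / ϑ = 1 / ϑ * (Λ - d) - c / ϑ := by ring
  rw [hsplit] at hdrift
  linarith

lemma isLayerStep_of_conditions (hϑ : 0 < ϑ) (hκ₀ : 0 ≤ κ)
    (hκ : κ = 2 * (u + (1 - 1 / ϑ) * (Λ - d)))
    (hDRIFT : ∀ v, d - u + (Λ - d - C v) / ϑ ≤ T' v - T v ∧ T' v - T v ≤ Λ - C v)
    (hSC : ∀ v, (∀ w, G.Adj v w → C v / ϑ ≤ T v - T w + σ) ∨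
      (∃ w, G.Adj v w ∧ C v / ϑ ≤ T v - T w - σ) ∨ C v ≤ 0)
    (hFC : ∀ v, (∃ w, G.Adj v w ∧ T v - T w + τ + κ ≤ C v) ∨
      (∀ w, G.Adj v w → T v - T w - τ + κ ≤ C v) ∨ κ ≤ C v)
    (hJC : ∀ v, (κ < C v / ϑ ∧ ∀ w, G.Adj v w → C v / ϑ ≤ T v - T w - κ) ∨
      (C v < 0 ∧ ∀ w, G.Adj v w → T v - T w + κ ≤ C v) ∨ (0 ≤ C v / ϑ ∧ C v / ϑ ≤ κ)) :
    IsLayerStep G κ Λ τ σ T T' := by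
  have lower v : T v + Λ - κ / 2 - C v / ϑ ≤ T' v :=
    add_sub_half_kappa_sub_le_of_drift hκ (hDRIFT v).1
  have upper v : T' v ≤ T v + Λ - C v := by linarith [(hDRIFT v).2]
  have div_nonpos {c : ℝ} (hc : c ≤ 0) : c / ϑ ≤ 0 := div_nonpos_of_nonpos_of_nonneg hc hϑ.le
  have nonneg_of_div {c : ℝ} (hc : 0 ≤ c / ϑ) : 0 ≤ c := by
    simpa using (le_div_iff₀ hϑ).mp hc
  refine ⟨fun v => ?_, fun v => ?_, fun v => ?_, fun v => ?_⟩
  · exact (hSC v).imp (fun hall w hw => by linarith [lower v, hall w hw]) <| Or.imp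
      (fun ⟨w, hw, hle⟩ => ⟨w, hw, by linarith [lower v]⟩)
      (fun hC => by linarith [lower v, div_nonpos hC])
  · exact (hFC v).imp (fun ⟨w, hw, hle⟩ => ⟨w, hw, by linarith [upper v]⟩) <| Or.imp
      (fun hall w hw => by linarith [upper v, hall w hw])
      (fun hC => by linarith [upper v])
  · rcases hJC v with ⟨hC, -⟩ | ⟨-, hall⟩ | ⟨hC, -⟩
    · exact Or.inl (by linarith [upper v, nonneg_of_div (hκ₀.trans hC.le)])
    · exact Or.inr fun w hw => by linarith [upper v, hall w hw]
    · exact Or.inl (by linarith [upper v, nonneg_of_div hC])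
  · rcases hJC v with ⟨-, hall⟩ | ⟨hC, -⟩ | ⟨-, hC⟩
    · exact Or.inr fun w hw => by linarith [lower v, hall w hw]
    · exact Or.inl (by linarith [lower v, div_nonpos hC.le])
    · exact Or.inl (by linarith [lower v])

lemma kappa_pos (hϑ : 1 < ϑ) (hu : 0 ≤ u) (hΛ : d < Λ)
    (hκ : κ = 2 * (u + (1 - 1 / ϑ) * (Λ - d))) : 0 < κ := by
  have hinv : 1 / ϑ < 1 := (div_lt_one (by linarith)).mpr hϑ
  have hgap : 0 < (1 - 1 / ϑ) * (Λ - d) := mul_pos (sub_pos.mpr hinv) (sub_pos.mpr hΛ)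
  linarith

end Conditions

section Halving

variable {V : Type*} {G : SimpleGraph V} {Λ κ s Ψ : ℝ} {t : V → ℕ → ℝ}

lemma skew_le_add_half_of_lt {Ξ : ℝ} (hconn : G.Connected) (hκ : 0 < κ) (hs : 1 / 2 ≤ s)
    (hstep : ∀ ℓ, IsLayerStep G κ Λ ((4 * s - 2) * κ) (4 * s * κ) (t · ℓ) (t · (ℓ + 1)))
    (hΞ : ∀ p q, t p 0 - t q 0 - (4 * s - 2) * κ * G.dist p q ≤ Ξ)
    {ℓ : ℕ} (hℓ : ℓ < Ψ / κ) (v w : V) :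
    t v ℓ - t w ℓ - 4 * s * κ * G.dist v w ≤ Ξ + Ψ / 2 := by
  have hℓΨ : ℓ * κ < Ψ := (lt_div_iff₀ hκ).mp hℓ
  have hℓκ : 0 ≤ ℓ * κ := by positivity
  have hΞ₀ : 0 ≤ Ξ := by simpa using hΞ v v
  have hskew := skew_le_or_exists_skew_ge hconn hκ.le
    (mul_nonneg (by linarith) hκ.le) (by linarith) hstep 0 ℓ v w
  rw [zero_add] at hskew
  rcases hskew with hle | ⟨p, x, hpx⟩
  · linarith
  · linarith [hΞ p x]

lemma skew_le_half_of_le (hconn : G.Connected) (hκ : 0 < κ) (hs : 1 / 2 ≤ s)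
    (hstep : ∀ ℓ, IsLayerStep G κ Λ ((4 * s - 2) * κ) (4 * s * κ) (t · ℓ) (t · (ℓ + 1)))
    (hΨ : ∀ ℓ v w, t v ℓ - t w ℓ - 4 * (s - 1) * κ * G.dist v w ≤ Ψ)
    {ℓ : ℕ} (hℓ : Ψ / κ ≤ ℓ) (v w : V) :
    t v ℓ - t w ℓ - 4 * s * κ * G.dist v w ≤ Ψ / 2 := by
  have hΨ₀ : 0 ≤ Ψ := by simpa using hΨ 0 v v
  set m := ⌊Ψ / κ⌋₊
  have hm_le : m * κ ≤ Ψ := (le_div_iff₀ hκ).mp (Nat.floor_le (by positivity))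
  have hlt_m : Ψ < (m + 1) * κ := (div_lt_iff₀ hκ).mp (Nat.lt_floor_add_one _)
  obtain ⟨k, rfl⟩ := Nat.exists_eq_add_of_le' (Nat.floor_le_of_le hℓ : m ≤ ℓ)
  rcases skew_le_or_exists_skew_ge hconn hκ.le
    (mul_nonneg (by linarith) hκ.le) (by linarith) hstep k m v w with hle | ⟨p, x, hpx⟩
  · linarith
  · have hdist : 0 ≤ κ * G.dist p x := by positivity
    linarith [hΨ k p x]

end Halving

theorem stmt11_general {ϑ u d Λ κ : ℝ} (hϑ : 1 < ϑ) (hu : 0 ≤ u) (hΛ : d < Λ)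
    (hκ : κ = 2 * (u + (1 - 1 / ϑ) * (Λ - d)))
    {V : Type*} {G : SimpleGraph V} (hconn : G.Connected) {t C : V → ℕ → ℝ}
    (hDRIFT : ∀ v ℓ,
      d - u + (Λ - d - C v (ℓ + 1)) / ϑ ≤ t v (ℓ + 1) - t v ℓ ∧
      t v (ℓ + 1) - t v ℓ ≤ Λ - C v (ℓ + 1))
    {s : ℝ} (hs : 1 / 2 ≤ s)
    (hSC : ∀ v ℓ,
      (∀ w, G.Adj v w → C v (ℓ + 1) / ϑ ≤ t v ℓ - t w ℓ + 4 * s * κ) ∨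
      (∃ w, G.Adj v w ∧ C v (ℓ + 1) / ϑ ≤ t v ℓ - t w ℓ - 4 * s * κ) ∨
      C v (ℓ + 1) ≤ 0)
    (hFC : ∀ v ℓ,
      (∃ w, G.Adj v w ∧ t v ℓ - t w ℓ + (4 * s - 2) * κ + κ ≤ C v (ℓ + 1)) ∨
      (∀ w, G.Adj v w → t v ℓ - t w ℓ - (4 * s - 2) * κ + κ ≤ C v (ℓ + 1)) ∨
      κ ≤ C v (ℓ + 1))
    (hJC : ∀ v ℓ,
      (κ < C v (ℓ + 1) / ϑ ∧ ∀ w, G.Adj v w → C v (ℓ + 1) / ϑ ≤ t v ℓ - t w ℓ - κ) ∨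
      (C v (ℓ + 1) < 0 ∧ ∀ w, G.Adj v w → t v ℓ - t w ℓ + κ ≤ C v (ℓ + 1)) ∨
      (0 ≤ C v (ℓ + 1) / ϑ ∧ C v (ℓ + 1) / ϑ ≤ κ))
    {Ψ Ξ : ℝ} (hΨ : ∀ ℓ v w, t v ℓ - t w ℓ - 4 * (s - 1) * κ * G.dist v w ≤ Ψ)
    (hΞ : ∀ p q, t p 0 - t q 0 - (4 * s - 2) * κ * G.dist p q ≤ Ξ) (ℓ : ℕ) :
    (ℓ < Ψ / κ → ∀ v w, t v ℓ - t w ℓ - 4 * s * κ * G.dist v w ≤ Ξ + Ψ / 2) ∧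
      (Ψ / κ ≤ ℓ → ∀ v w, t v ℓ - t w ℓ - 4 * s * κ * G.dist v w ≤ Ψ / 2) := by
  have hκ₀ : 0 < κ := kappa_pos hϑ hu hΛ hκ
  have hstep ℓ : IsLayerStep G κ Λ ((4 * s - 2) * κ) (4 * s * κ) (t · ℓ) (t · (ℓ + 1)) :=
    isLayerStep_of_conditions (zero_lt_one.trans hϑ) hκ₀.le hκ
      (hDRIFT · ℓ) (hSC · ℓ) (hFC · ℓ) (hJC · ℓ)
  exact ⟨skew_le_add_half_of_lt hconn hκ₀ hs hstep hΞ, skew_le_half_of_le hconn hκ₀ hs hstep hΨ⟩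

/-- The `tmax`/`tmin` over neighbours in the SC/FC/JC conditions are expressed
pointwise over the (nonempty) neighbourhood, which is equivalent. -/
theorem stmt11
    (ϑ u d Λ κ : ℝ)
    (hϑ : 1 < ϑ) (hu : 0 ≤ u) (hd : u ≤ d) (hΛ : d < Λ)
    (hκ : κ = 2 * (u + (1 - 1/ϑ) * (Λ - d)))
    {V : Type*} [Fintype V] [Nonempty V]
    (G : SimpleGraph V) [DecidableRel G.Adj]
    (hconn : G.Connected) (hdeg : ∀ v : V, 2 ≤ G.degree v)
    (D : ℕ) (hD : 1 ≤ D) (hdiam : ∀ v w : V, G.dist v w ≤ D)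
    (t : V → ℕ → ℝ) (C : V → ℕ → ℝ)
    (hDRIFT : ∀ (v : V) (ℓ : ℕ),
      d - u + (Λ - d - C v (ℓ+1)) / ϑ ≤ t v (ℓ+1) - t v ℓ ∧
      t v (ℓ+1) - t v ℓ ≤ Λ - C v (ℓ+1))
    (hSC : ∀ (s : ℕ) (v : V) (ℓ : ℕ),
      (∀ w : V, G.Adj v w → C v (ℓ+1) / ϑ ≤ t v ℓ - t w ℓ + 4*(s:ℝ)*κ) ∨
      (∃ w : V, G.Adj v w ∧ C v (ℓ+1) / ϑ ≤ t v ℓ - t w ℓ - 4*(s:ℝ)*κ) ∨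
      C v (ℓ+1) ≤ 0)
    (hFC : ∀ (s : ℕ), 1 ≤ s → ∀ (v : V) (ℓ : ℕ),
      (∃ w : V, G.Adj v w ∧ t v ℓ - t w ℓ + (4*(s:ℝ)-2)*κ + κ ≤ C v (ℓ+1)) ∨
      (∀ w : V, G.Adj v w → t v ℓ - t w ℓ - (4*(s:ℝ)-2)*κ + κ ≤ C v (ℓ+1)) ∨
      κ ≤ C v (ℓ+1))
    (hJC : ∀ (v : V) (ℓ : ℕ),
      (κ < C v (ℓ+1)/ϑ ∧ ∀ w : V, G.Adj v w → C v (ℓ+1)/ϑ ≤ t v ℓ - t w ℓ - κ) ∨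
      (C v (ℓ+1) < 0 ∧ ∀ w : V, G.Adj v w → t v ℓ - t w ℓ + κ ≤ C v (ℓ+1)) ∨
      (0 ≤ C v (ℓ+1)/ϑ ∧ C v (ℓ+1)/ϑ ≤ κ))
    (s : ℕ) (hs : 1 ≤ s) (Ψ : ℝ)
    (hΨ : ∀ (ℓ : ℕ) (v w : V),
      t v ℓ - t w ℓ - 4*((s:ℝ)-1)*κ*(G.dist v w : ℝ) ≤ Ψ) :
    ∀ ℓ : ℕ,
      ((ℓ:ℝ) < Ψ/κ →
        ∀ v w : V, t v ℓ - t w ℓ - 4*(s:ℝ)*κ*(G.dist v w : ℝ) ≤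
          (⨆ p : V, ⨆ q : V, (t p 0 - t q 0 - (4*(s:ℝ)-2)*κ*(G.dist p q : ℝ))) + Ψ/2) ∧
      (Ψ/κ ≤ (ℓ:ℝ) →
        ∀ v w : V, t v ℓ - t w ℓ - 4*(s:ℝ)*κ*(G.dist v w : ℝ) ≤ Ψ/2) := by
  have hs' : (1 / 2 : ℝ) ≤ s := by linarith [(Nat.one_le_cast (α := ℝ)).mpr hs]
  exact stmt11_general hϑ hu hΛ hκ hconn hDRIFT hs' (hSC s) (hFC s hs) hJC hΨ
    fun p q => Finite.le_ciSup_of_le p <| Finite.le_ciSup_of_le q le_rfl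
end
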